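/- Every flow-admissible 3-edge-colorable cubic signed graph (G,σ) has a sign-circuit cover of length at most (20/9)|E(G)|. -/

import Mathlib

open SimpleGraph

variable {V : Type*}

/-- `σ e = true` means the edge `e` is negative. Number of negative edges in `E`. -/
noncomputable def negCount (σ : Sym2 V → Bool) (E : Set (Sym2 V)) : ℕ :=
  (E ∩ {e | σ e = true}).ncard

/-- Number of negative edges in a list of edges (with multiplicity). -/
def listNegCount (σ : Sym2 V → Bool) (l : List (Sym2 V)) : ℕ :=
  (l.filter fun e => σ e).length

/-- A circuit: a connected `2`-regular subgraph. -/
def IsCircuit (G : SimpleGraph V) (C : G.Subgraph) : Prop :=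
  C.Connected ∧ ∀ v ∈ C.verts, (C.neighborSet v).ncard = 2

/-- A balanced circuit: even number of negative edges. -/
def IsBalancedCircuit (G : SimpleGraph V) (σ : Sym2 V → Bool) (C : G.Subgraph) : Prop :=
  IsCircuit G C ∧ Even (negCount σ C.edgeSet)

/-- An unbalanced circuit: odd number of negative edges. -/
def IsUnbalancedCircuit (G : SimpleGraph V) (σ : Sym2 V → Bool) (C : G.Subgraph) : Prop :=
  IsCircuit G C ∧ Odd (negCount σ C.edgeSet)

/-- `P` is the subgraph of a (possibly trivial) path from `u` to `v`. -/
def IsPathSubgraph (G : SimpleGraph V) (P : G.Subgraph) (u v : V) : Prop :=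
  ∃ w : G.Walk u v, w.IsPath ∧ P.verts = {x | x ∈ w.support} ∧
    P.edgeSet = {e | e ∈ w.edges}

/-- A barbell: two unbalanced circuits joined by a (possibly trivial) path
meeting the circuits only at its ends. -/
def IsBarbell (G : SimpleGraph V) (σ : Sym2 V → Bool) (H : G.Subgraph) : Prop :=
  ∃ (C₁ C₂ P : G.Subgraph) (u v : V),
    IsUnbalancedCircuit G σ C₁ ∧ IsUnbalancedCircuit G σ C₂ ∧
    IsPathSubgraph G P u v ∧ u ∈ C₁.verts ∧ v ∈ C₂.verts ∧
    P.verts ∩ C₁.verts = {u} ∧ P.verts ∩ C₂.verts = {v} ∧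
    C₁.verts ∩ C₂.verts ⊆ {u} ∩ {v} ∧
    C₁.edgeSet ∩ C₂.edgeSet = ∅ ∧
    H = C₁ ⊔ C₂ ⊔ P

/-- A sign-circuit: a balanced circuit or a barbell. -/
def IsSignCircuit (G : SimpleGraph V) (σ : Sym2 V → Bool) (H : G.Subgraph) : Prop :=
  IsBalancedCircuit G σ H ∨ IsBarbell G σ H

/-- Flow-admissible: every edge lies in a sign-circuit (equivalently, the signed
graph admits a nowhere-zero integer flow). -/
def FlowAdmissible (G : SimpleGraph V) (σ : Sym2 V → Bool) : Prop :=
  ∀ e ∈ G.edgeSet, ∃ H : G.Subgraph, IsSignCircuit G σ H ∧ e ∈ H.edgeSet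

/-- Total length of a family of subgraphs. -/
noncomputable def coverLength (G : SimpleGraph V) (𝓕 : Multiset G.Subgraph) : ℕ :=
  (𝓕.map fun H => H.edgeSet.ncard).sum

/-- The family `𝓕` covers the edge set `E`. -/
def Covers (G : SimpleGraph V) (𝓕 : Multiset G.Subgraph) (E : Set (Sym2 V)) : Prop :=
  ∀ e ∈ E, ∃ H ∈ 𝓕, e ∈ H.edgeSet

/-- Cubic graph: every vertex has degree `3`. -/
def IsCubic (G : SimpleGraph V) : Prop := ∀ v : V, (G.neighborSet v).ncard = 3

/-- `2`-edge-connected: connected and bridgeless. -/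
def TwoEdgeConnected (G : SimpleGraph V) : Prop :=
  G.Connected ∧ ∀ e, ¬ G.IsBridge e

/-- Balanced signed graph: every circuit has an even number of negative edges. -/
def IsBalancedGraph (G : SimpleGraph V) (σ : Sym2 V → Bool) : Prop :=
  ∀ C : G.Subgraph, IsCircuit G C → Even (negCount σ C.edgeSet)

/-- A `2`-factor: a spanning `2`-regular subgraph. -/
def IsTwoFactor (G : SimpleGraph V) (F : G.Subgraph) : Prop :=
  F.IsSpanning ∧ ∀ v : V, (F.neighborSet v).ncard = 2

/-- A proper 3-edge-coloring: edges sharing a vertex get different colors. -/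
def Proper3EdgeColoring (G : SimpleGraph V) (c : Sym2 V → Fin 3) : Prop :=
  ∀ e ∈ G.edgeSet, ∀ f ∈ G.edgeSet, e ≠ f → (∃ x, x ∈ e ∧ x ∈ f) → c e ≠ c f

/-- 3-edge-colorable graph. -/
def ThreeEdgeColorable (G : SimpleGraph V) : Prop :=
  ∃ c : Sym2 V → Fin 3, Proper3EdgeColoring G c

/-- `S` is a segment of the circuit `C` determined by a set `Mv` of vertices
(the vertex set of a component `M`): a maximal subpath of `C` whose endpoints
are attachments of `M` and whose internal vertices are not in `M`. -/
def IsSegment (G : SimpleGraph V) (C : G.Subgraph) (Mv : Set V) (S : G.Subgraph) : Prop :=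
  ∃ (a b : V) (w : G.Walk a b),
    w.edges ≠ [] ∧ w.support.tail.Nodup ∧
    (∀ e ∈ w.edges, e ∈ C.edgeSet) ∧
    a ∈ Mv ∧ b ∈ Mv ∧
    (∀ x ∈ w.support, x ∈ Mv → x = a ∨ x = b) ∧
    S.verts = {x | x ∈ w.support} ∧ S.edgeSet = {e | e ∈ w.edges}

/-!
Write `n` for the number of vertices of a connected cubic graph; as `|E| = 3n/2`, a cover of length
at most `10n/3` is wanted. The edges avoiding one color form a 2-factor of bicolored cycles. The
bicolored cycles of the three colors are the faces of a surface, so there are at most `(n + 4) / 2`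
of them, and joining up the 2-factor with the fewest cycles gives a closed tour of all vertices of
length at most `4n/3`. If a 2-factor has an even number of unbalanced cycles, these can be paired
up along the tour in two ways; taking the cheaper one covers the 2-factor with length at most
`n + 2n/3`. Two such 2-factors give the bound. Otherwise exactly one of the three 2-factors is
even. A Kempe swap along an unbalanced cycle of it makes all three even, and if it has no such cycle
it covers itself with length `n`, leaving `7n/3` for one of the other two. There, one unbalanced
cycle is left out of the pairing: if there are several, it is one of the two closest and is joined
to the other, and if it is the only one, it is covered on its own.

It remains to cover an unbalanced cycle `C`. If another unbalanced cycle is disjoint from it, the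
two lie in a barbell. If not, switching makes every edge off `C` positive, and an arc of `C` is good
if a path off `C` closes it up to a balanced circuit. Since no switching leaves exactly one negative
edge, the good arcs cover `C`. Either three good arcs at the same component wind twice around `C`,
or each component has a largest good arc, and a minimal subfamily of these covers each edge at most
twice.
-/

section Signs

variable {G : SimpleGraph V} {σ : Sym2 V → Bool}

/-- The sign of an edge written additively: `1` on negative edges and `0` on positive ones, so that
signs of walks are sums. -/
def edgeSign (σ : Sym2 V → Bool) (e : Sym2 V) : ZMod 2 := if σ e then 1 else 0

/-- The sign of a walk, written additively: the parity of the number of negative edges it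
traverses, with multiplicity. -/
def walkSign (σ : Sym2 V → Bool) {u v : V} (p : G.Walk u v) : ZMod 2 :=
  (p.edges.map (edgeSign σ)).sum

@[simp] lemma walkSign_nil (u : V) : walkSign σ (Walk.nil : G.Walk u u) = 0 := by
  simp [walkSign]

@[simp] lemma walkSign_cons {u v w : V} (h : G.Adj u v) (p : G.Walk v w) :
    walkSign σ (Walk.cons h p) = edgeSign σ s(u, v) + walkSign σ p := by
  simp [walkSign]

@[simp] lemma walkSign_append {u v w : V} (p : G.Walk u v) (q : G.Walk v w) :
    walkSign σ (p.append q) = walkSign σ p + walkSign σ q := by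
  simp [walkSign]

@[simp] lemma walkSign_reverse {u v : V} (p : G.Walk u v) :
    walkSign σ p.reverse = walkSign σ p := by
  simp [walkSign, List.sum_reverse]

@[simp] lemma walkSign_mapLe {H : SimpleGraph V} (h : H ≤ G) {u v : V} (p : H.Walk u v) :
    walkSign σ (p.mapLe h) = walkSign σ p := by
  rw [walkSign, Walk.edges_mapLe_eq_edges, walkSign]

lemma zmod_two_ne_one_iff {x : ZMod 2} : x ≠ 1 ↔ x = 0 := by
  revert x; decide

lemma natCast_card_filter_eq_one {ι : Type*} (s : Finset ι) (f : ι → ZMod 2) :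
    ((s.filter (f · = 1)).card : ZMod 2) = ∑ i ∈ s, f i := by
  rw [Finset.card_filter, Nat.cast_sum]
  refine Finset.sum_congr rfl fun i _ => ?_
  generalize f i = x
  revert x; decide

lemma walkSign_eq_listNegCount {u v : V} (p : G.Walk u v) :
    walkSign σ p = listNegCount σ p.edges := by
  rw [walkSign, listNegCount]
  induction p.edges with
  | nil => simp
  | cons a l ih => by_cases h : σ a = true <;> simp [edgeSign, h, ih, add_comm]

lemma negCount_edgeSet_toSubgraph {u v : V} {p : G.Walk u v} (hp : p.IsTrail) :
    negCount σ p.toSubgraph.edgeSet = listNegCount σ p.edges := by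
  classical
  have h : p.toSubgraph.edgeSet ∩ {e | σ e = true} =
      ((p.edges.filter fun e => σ e).toFinset : Set (Sym2 V)) := by
    ext e; simp
  rw [negCount, h, Set.ncard_coe_finset, List.toFinset_card_of_nodup (hp.edges_nodup.filter _),
    listNegCount]

lemma ncard_edgeSet_toSubgraph {u v : V} {p : G.Walk u v} (hp : p.IsTrail) :
    p.toSubgraph.edgeSet.ncard = p.length := by
  classical
  rw [Walk.edgeSet_toSubgraph, ← Walk.coe_edges_toFinset, Set.ncard_coe_finset,
    List.toFinset_card_of_nodup hp.edges_nodup, Walk.length_edges]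

lemma isCircuit_toSubgraph {u : V} {p : G.Walk u u} (hp : p.IsCycle) :
    IsCircuit G p.toSubgraph :=
  ⟨p.toSubgraph_connected, fun _ hv =>
    hp.ncard_neighborSet_toSubgraph_eq_two (p.mem_verts_toSubgraph.1 hv)⟩

lemma isBalancedCircuit_toSubgraph {u : V} {p : G.Walk u u} (hp : p.IsCycle)
    (h : walkSign σ p = 0) : IsBalancedCircuit G σ p.toSubgraph := by
  refine ⟨isCircuit_toSubgraph hp, ?_⟩
  rwa [negCount_edgeSet_toSubgraph hp.isTrail, ← ZMod.natCast_eq_zero_iff_even,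
    ← walkSign_eq_listNegCount]

lemma isUnbalancedCircuit_toSubgraph {u : V} {p : G.Walk u u} (hp : p.IsCycle)
    (h : walkSign σ p = 1) : IsUnbalancedCircuit G σ p.toSubgraph := by
  refine ⟨isCircuit_toSubgraph hp, ?_⟩
  rwa [negCount_edgeSet_toSubgraph hp.isTrail, ← ZMod.natCast_eq_one_iff_odd,
    ← walkSign_eq_listNegCount]

end Signs

section SignCovers

variable {G : SimpleGraph V} {σ : Sym2 V → Bool}

variable (G σ) in
/-- The edge set `S` has a cover by sign-circuits of `(G, σ)` of length at most `c`. Bounding the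
length instead of prescribing it makes the notion monotone in both `S` and `c`. -/
def HasSignCover (S : Set (Sym2 V)) (c : ℕ) : Prop :=
  ∃ 𝓕 : Multiset G.Subgraph, (∀ H ∈ 𝓕, IsSignCircuit G σ H) ∧ Covers G 𝓕 S ∧
    coverLength G 𝓕 ≤ c

namespace HasSignCover

lemma empty : HasSignCover G σ ∅ 0 :=
  ⟨0, by simp, by simp [Covers], by simp [coverLength]⟩

lemma mono {S T : Set (Sym2 V)} {c d : ℕ} (h : HasSignCover G σ S c) (hS : T ⊆ S) (hc : c ≤ d) :
    HasSignCover G σ T d := by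
  obtain ⟨𝓕, hsign, hcov, hlen⟩ := h
  exact ⟨𝓕, hsign, fun e he => hcov e (hS he), hlen.trans hc⟩

lemma union {S T : Set (Sym2 V)} {c d : ℕ} (h : HasSignCover G σ S c)
    (h' : HasSignCover G σ T d) : HasSignCover G σ (S ∪ T) (c + d) := by
  obtain ⟨𝓕, hsign, hcov, hlen⟩ := h
  obtain ⟨𝓕', hsign', hcov', hlen'⟩ := h'
  refine ⟨𝓕 + 𝓕', fun H hH => (Multiset.mem_add.1 hH).elim (hsign H) (hsign' H), ?_, ?_⟩
  · rintro e (he | he)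
    · obtain ⟨H, hH, he⟩ := hcov e he
      exact ⟨H, Multiset.mem_add.2 (Or.inl hH), he⟩
    · obtain ⟨H, hH, he⟩ := hcov' e he
      exact ⟨H, Multiset.mem_add.2 (Or.inr hH), he⟩
  · simp only [coverLength, Multiset.map_add, Multiset.sum_add] at *
    omega

lemma biUnion {ι : Type*} (s : Finset ι) (S : ι → Set (Sym2 V)) (c : ι → ℕ)
    (h : ∀ i ∈ s, HasSignCover G σ (S i) (c i)) :
    HasSignCover G σ (⋃ i ∈ s, S i) (∑ i ∈ s, c i) := by
  classical
  induction s using Finset.induction_on with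
  | empty => simpa using empty
  | insert a s ha ih =>
    rw [Finset.sum_insert ha, Finset.set_biUnion_insert]
    exact (h a (Finset.mem_insert_self a s)).union
      (ih fun i hi => h i (Finset.mem_insert_of_mem hi))

lemma of_isSignCircuit {H : G.Subgraph} (h : IsSignCircuit G σ H) :
    HasSignCover G σ H.edgeSet H.edgeSet.ncard :=
  ⟨{H}, by simpa using h, fun e he => ⟨H, by simp, he⟩, by simp [coverLength]⟩

lemma of_balanced_isCycle {u : V} {p : G.Walk u u} (hp : p.IsCycle) (h : walkSign σ p = 0) :
    HasSignCover G σ p.edgeSet p.length := by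
  rw [← Walk.edgeSet_toSubgraph, ← ncard_edgeSet_toSubgraph hp.isTrail]
  exact of_isSignCircuit (Or.inl (isBalancedCircuit_toSubgraph hp h))

end HasSignCover

end SignCovers

section Barbells

variable {G : SimpleGraph V} {σ : Sym2 V → Bool}

/-- `w` is an `A`–`B` path: a path from `A` to `B` whose only vertex in `A` is its start and whose
only vertex in `B` is its end. -/
structure IsPathBetween (A B : Set V) {u v : V} (w : G.Walk u v) : Prop where
  isPath : w.IsPath
  start_mem : u ∈ A
  end_mem : v ∈ B
  eq_start : ∀ z ∈ w.support, z ∈ A → z = u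
  eq_end : ∀ z ∈ w.support, z ∈ B → z = v

lemma exists_isPath_to_set (S : Set V) {x y : V} (w : G.Walk x y) (hy : y ∈ S) :
    ∃ u ∈ S, ∃ w' : G.Walk x u, w'.IsPath ∧ w'.length ≤ w.length ∧
      w'.support ⊆ w.support ∧ ∀ z ∈ w'.support, z ∈ S → z = u := by
  classical
  obtain ⟨u, huS, hu, hfirst⟩ := w.bypass.exists_mem_support_forall_mem_support_imp_eq
    (w.support.toFinset.filter (· ∈ S)) ⟨y, by simp [hy]⟩
  have hsub : (w.bypass.takeUntil u hu).support ⊆ w.support := fun z hz =>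
    w.support_bypass_subset_support (w.bypass.support_takeUntil_subset_support hu hz)
  refine ⟨u, (Finset.mem_filter.1 huS).2, w.bypass.takeUntil u hu,
    w.bypass_isPath.takeUntil hu, (w.bypass.length_takeUntil_le_length hu).trans
    w.length_bypass_le_length, hsub, fun z hz hzS => hfirst z ?_ hz⟩
  exact Finset.mem_filter.2 ⟨List.mem_toFinset.2 (hsub hz), hzS⟩

lemma exists_isPathBetween (A B : Set V) {x y : V} (w : G.Walk x y) (hx : x ∈ A) (hy : y ∈ B) :
    ∃ (u v : V) (w' : G.Walk u v), IsPathBetween A B w' ∧ w'.length ≤ w.length := by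
  obtain ⟨v, hv, w₁, -, hlen₁, -, hend⟩ := exists_isPath_to_set B w hy
  obtain ⟨u, hu, w₂, hpath, hlen₂, hsub, hstart⟩ := exists_isPath_to_set A w₁.reverse hx
  refine ⟨u, v, w₂.reverse, ⟨hpath.reverse, hu, hv, fun z hz => hstart z (by simpa using hz),
    fun z hz => hend z ?_⟩, ?_⟩
  · simpa using hsub (by simpa using hz : z ∈ w₂.support)
  · simp only [Walk.length_reverse] at *
    omega

lemma isBarbell_toSubgraph {r s u v : V} {p : G.Walk r r} {q : G.Walk s s} {w : G.Walk u v}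
    (hp : p.IsCycle) (hq : q.IsCycle) (hsp : walkSign σ p = 1) (hsq : walkSign σ q = 1)
    (hpq : p.support.Disjoint q.support)
    (hw : IsPathBetween {z | z ∈ p.support} {z | z ∈ q.support} w) :
    IsBarbell G σ (p.toSubgraph ⊔ q.toSubgraph ⊔ w.toSubgraph) := by
  refine ⟨p.toSubgraph, q.toSubgraph, w.toSubgraph, u, v,
    isUnbalancedCircuit_toSubgraph hp hsp, isUnbalancedCircuit_toSubgraph hq hsq,
    ⟨w, hw.isPath, by ext; simp, by ext; simp⟩, by simpa using hw.start_mem,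
    by simpa using hw.end_mem, ?_, ?_, ?_, ?_, rfl⟩
  · ext z
    simp only [Set.mem_inter_iff, Walk.mem_verts_toSubgraph, Set.mem_singleton_iff]
    exact ⟨fun h => hw.eq_start z h.1 h.2,
      by rintro rfl; exact ⟨w.start_mem_support, hw.start_mem⟩⟩
  · ext z
    simp only [Set.mem_inter_iff, Walk.mem_verts_toSubgraph, Set.mem_singleton_iff]
    exact ⟨fun h => hw.eq_end z h.1 h.2, by rintro rfl; exact ⟨w.end_mem_support, hw.end_mem⟩⟩
  · rintro z ⟨hzp, hzq⟩
    exact (hpq (p.mem_verts_toSubgraph.1 hzp) (q.mem_verts_toSubgraph.1 hzq)).elim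
  · rw [Set.eq_empty_iff_forall_notMem]
    rintro ⟨a, b⟩ ⟨hep, heq⟩
    exact hpq (p.fst_mem_support_of_mem_edges (p.mem_edges_toSubgraph.1 hep))
      (q.fst_mem_support_of_mem_edges (q.mem_edges_toSubgraph.1 heq))

lemma HasSignCover.of_isPathBetween {r s u v : V} {p : G.Walk r r} {q : G.Walk s s}
    {w : G.Walk u v} (hp : p.IsCycle) (hq : q.IsCycle) (hsp : walkSign σ p = 1)
    (hsq : walkSign σ q = 1) (hpq : p.support.Disjoint q.support)
    (hw : IsPathBetween {z | z ∈ p.support} {z | z ∈ q.support} w) :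
    HasSignCover G σ (p.edgeSet ∪ q.edgeSet) (p.length + q.length + w.length) := by
  refine (of_isSignCircuit (Or.inr (isBarbell_toSubgraph hp hq hsp hsq hpq hw))).mono ?_ ?_
  · simp only [Subgraph.edgeSet_sup, Walk.edgeSet_toSubgraph]
    exact Set.subset_union_left
  · rw [← ncard_edgeSet_toSubgraph hp.isTrail, ← ncard_edgeSet_toSubgraph hq.isTrail,
      ← ncard_edgeSet_toSubgraph hw.isPath.isTrail, Subgraph.edgeSet_sup, Subgraph.edgeSet_sup]
    exact (Set.ncard_union_le _ _).trans (Nat.add_le_add_right (Set.ncard_union_le _ _) _)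

lemma HasSignCover.of_disjoint_unbalanced {r s x y : V} {p : G.Walk r r} {q : G.Walk s s}
    (hp : p.IsCycle) (hq : q.IsCycle) (hsp : walkSign σ p = 1) (hsq : walkSign σ q = 1)
    (hpq : p.support.Disjoint q.support) (w : G.Walk x y) (hx : x ∈ p.support)
    (hy : y ∈ q.support) :
    HasSignCover G σ (p.edgeSet ∪ q.edgeSet) (p.length + q.length + w.length) := by
  obtain ⟨u, v, w', hw', hlen⟩ :=
    exists_isPathBetween {z | z ∈ p.support} {z | z ∈ q.support} w hx hy
  exact (of_isPathBetween hp hq hsp hsq hpq hw').mono subset_rfl (by omega)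

lemma card_support_of_isPath [DecidableEq V] {u v : V} {p : G.Walk u v} (hp : p.IsPath) :
    p.support.toFinset.card = p.length + 1 := by
  rw [List.toFinset_card_of_nodup hp.support_nodup, Walk.length_support]

lemma card_support_of_isCycle [DecidableEq V] {u : V} {p : G.Walk u u} (hp : p.IsCycle) :
    p.support.toFinset.card = p.length := by
  have h : p.support.toFinset = p.support.tail.toFinset := by
    conv_lhs => rw [← p.cons_tail_support, List.toFinset_cons]
    exact Finset.insert_eq_self.2 (List.mem_toFinset.2 (Walk.end_mem_tail_support hp.not_nil))
  rw [h, List.toFinset_card_of_nodup hp.support_nodup, List.length_tail, Walk.length_support,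
    Nat.add_sub_cancel]

lemma length_add_length_add_length_le [Fintype V] {r s u v : V} {p : G.Walk r r}
    {q : G.Walk s s} {w : G.Walk u v} (hp : p.IsCycle) (hq : q.IsCycle)
    (hpq : p.support.Disjoint q.support)
    (hw : IsPathBetween {z | z ∈ p.support} {z | z ∈ q.support} w) :
    p.length + q.length + w.length ≤ Fintype.card V + 1 := by
  classical
  set P := p.support.toFinset
  set Q := q.support.toFinset
  set W := w.support.toFinset
  have hPQ : (P ∪ Q).card = p.length + q.length := by
    rw [Finset.card_union_of_disjoint, card_support_of_isCycle hp, card_support_of_isCycle hq]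
    exact List.disjoint_toFinset_iff_disjoint.2 hpq
  have hends : (P ∪ Q) ∩ W ⊆ {u, v} := by
    intro z
    simp only [P, Q, W, Finset.mem_inter, Finset.mem_union, List.mem_toFinset,
      Finset.mem_insert, Finset.mem_singleton]
    rintro ⟨hz | hz, hzw⟩
    exacts [Or.inl (hw.eq_start z hzw hz), Or.inr (hw.eq_end z hzw hz)]
  have hW : W.card = w.length + 1 := card_support_of_isPath hw.isPath
  have hcard := Finset.card_union_add_card_inter (P ∪ Q) W
  have htwo := (Finset.card_le_card hends).trans Finset.card_le_two
  have huniv := Finset.card_le_univ (P ∪ Q ∪ W)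
  omega

lemma HasSignCover.of_disjoint_unbalanced_of_connected [Fintype V] (hconn : G.Connected)
    {r s : V} {p : G.Walk r r} {q : G.Walk s s} (hp : p.IsCycle) (hq : q.IsCycle)
    (hsp : walkSign σ p = 1) (hsq : walkSign σ q = 1) (hpq : p.support.Disjoint q.support) :
    HasSignCover G σ (p.edgeSet ∪ q.edgeSet) (Fintype.card V + 1) := by
  obtain ⟨u, v, w, hw, -⟩ := exists_isPathBetween {z | z ∈ p.support} {z | z ∈ q.support}
    (hconn.preconnected r s).some p.start_mem_support q.start_mem_support
  exact (of_isPathBetween hp hq hsp hsq hpq hw).mono subset_rfl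
    (length_add_length_add_length_le hp hq hpq hw)

end Barbells

section CycleFactors

variable {G : SimpleGraph V} {σ : Sym2 V → Bool}

variable (G) in
/-- A partition of the vertices of `G` into cycles of `G` indexed by `ι`; these are the components
of a 2-factor, each traversed as a closed walk. -/
structure CycleFactor (ι : Type*) where
  /-- The index of the cycle through a vertex. -/
  comp : V → ι
  /-- The base point of a cycle. -/
  base : ι → V
  /-- The cycles. -/
  cyc : ∀ i, G.Walk (base i) (base i)
  isCycle : ∀ i, (cyc i).IsCycle
  mem_support : ∀ i v, v ∈ (cyc i).support ↔ comp v = i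

namespace CycleFactor

variable {ι : Type*} (F : CycleFactor G ι)

/-- The edge set of the 2-factor. -/
def edgeSet : Set (Sym2 V) := ⋃ i, (F.cyc i).edgeSet

lemma comp_base (i : ι) : F.comp (F.base i) = i :=
  (F.mem_support i _).1 (Walk.start_mem_support _)

lemma disjoint_support {i j : ι} (hij : i ≠ j) :
    (F.cyc i).support.Disjoint (F.cyc j).support := by
  intro z hi hj
  rw [F.mem_support] at hi hj
  exact hij (hi.symm.trans hj)

lemma disjoint_edges {i j : ι} (hij : i ≠ j) : (F.cyc i).edges.Disjoint (F.cyc j).edges := by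
  rintro ⟨a, b⟩ hi hj
  exact F.disjoint_support hij (Walk.fst_mem_support_of_mem_edges _ hi)
    (Walk.fst_mem_support_of_mem_edges _ hj)

lemma length_eq_card [Fintype V] [DecidableEq ι] (i : ι) :
    (F.cyc i).length = (Finset.univ.filter fun v => F.comp v = i).card := by
  classical
  rw [← card_support_of_isCycle (F.isCycle i)]
  congr 1
  ext v
  simp [F.mem_support]

lemma sum_length [Fintype V] [Fintype ι] : ∑ i, (F.cyc i).length = Fintype.card V := by
  classical
  simp_rw [F.length_eq_card]
  exact (Finset.card_eq_sum_card_fiberwise (fun v _ => Finset.mem_univ (F.comp v))).symm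

lemma sum_walkSign [Fintype ι] (E : Finset (Sym2 V)) (hE : (E : Set (Sym2 V)) = F.edgeSet) :
    ∑ i, walkSign σ (F.cyc i) = ∑ e ∈ E, edgeSign σ e := by
  classical
  have hunion : E = Finset.univ.biUnion fun i => (F.cyc i).edges.toFinset := by
    rw [← Finset.coe_inj, hE]
    simp [edgeSet, Walk.edgeSet]
  rw [hunion, Finset.sum_biUnion]
  · refine Finset.sum_congr rfl fun i _ => ?_
    rw [walkSign, List.sum_toFinset _ (F.isCycle i).edges_nodup]
  · exact fun i _ j _ hij => List.disjoint_toFinset_iff_disjoint.2 (F.disjoint_edges hij)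

end CycleFactor

lemma exists_cycleFactor [Finite V] {H : SimpleGraph V} (hH : H ≤ G)
    (hdeg : ∀ v, (H.neighborSet v).ncard = 2) :
    ∃ F : CycleFactor G H.ConnectedComponent, F.edgeSet = H.edgeSet := by
  have hcycles : H.IsCycles := fun v _ => hdeg v
  have hexists : ∀ K : H.ConnectedComponent, ∃ v, ∃ p : H.Walk v v, p.IsCycle ∧
      p.toSubgraph.verts = K.supp := by
    intro K
    obtain ⟨v, hv⟩ := K.nonempty_supp
    refine ⟨v, hcycles.exists_cycle_toSubgraph_verts_eq_connectedComponentSupp hv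
      (Set.nonempty_of_ncard_ne_zero ?_)⟩
    rw [hdeg]
    decide
  choose b p hp hsupp using hexists
  have hmem : ∀ K v, v ∈ (p K).support ↔ H.connectedComponentMk v = K := by
    intro K v
    rw [← Walk.mem_verts_toSubgraph, hsupp]
    exact ConnectedComponent.mem_supp_iff _ _
  refine ⟨⟨H.connectedComponentMk, b, fun K => (p K).mapLe hH, fun K => (hp K).mapLe hH,
    fun K v => by rw [Walk.support_mapLe_eq_support]; exact hmem K v⟩, ?_⟩
  ext ⟨v, w⟩
  simp only [CycleFactor.edgeSet, Set.mem_iUnion, Walk.mem_edgeSet, Walk.edges_mapLe_eq_edges]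
  refine ⟨fun ⟨K, he⟩ => Walk.edges_subset_edgeSet _ he, fun he => ⟨H.connectedComponentMk v, ?_⟩⟩
  set q := p (H.connectedComponentMk v)
  have hnbr : q.toSubgraph.neighborSet v = H.neighborSet v := by
    refine Set.eq_of_subset_of_ncard_le (Subgraph.neighborSet_subset _ _) ?_ (Set.toFinite _)
    rw [hdeg, (hp _).ncard_neighborSet_toSubgraph_eq_two ((hmem _ v).2 rfl)]
  have hw : w ∈ q.toSubgraph.neighborSet v := hnbr ▸ he
  exact q.mem_edges_toSubgraph.1 hw

end CycleFactors

section Colors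

variable {G : SimpleGraph V} {c : Sym2 V → Fin 3}

variable (G c) in
/-- The graph spanned by the edges whose color differs from `k`. In a properly 3-edge-colored cubic
graph it is a 2-factor, and its components are the bicolored cycles avoiding `k`. -/
abbrev colorDelete (k : Fin 3) : SimpleGraph V := G.deleteEdges {e | c e = k}

lemma colorDelete_adj {k : Fin 3} {v w : V} :
    (colorDelete G c k).Adj v w ↔ G.Adj v w ∧ c s(v, w) ≠ k := by
  simp [colorDelete]

lemma mem_edgeSet_colorDelete {k : Fin 3} {e : Sym2 V} :
    e ∈ (colorDelete G c k).edgeSet ↔ e ∈ G.edgeSet ∧ c e ≠ k := by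
  simp [colorDelete]

lemma exists_third_color {i j : Fin 3} (h : i ≠ j) :
    ∃ k, k ≠ i ∧ k ≠ j := by
  revert i j; decide

namespace Proper3EdgeColoring

lemma injOn (hc : Proper3EdgeColoring G c) (v : V) :
    Set.InjOn (fun w => c s(v, w)) (G.neighborSet v) := by
  intro a ha b hb hab
  by_contra hne
  exact hc s(v, a) ha s(v, b) hb (by rwa [ne_eq, Sym2.congr_right]) ⟨v, by simp, by simp⟩ hab

lemma image_neighborSet (hc : Proper3EdgeColoring G c) (hG : IsCubic G) (v : V) :
    (fun w => c s(v, w)) '' G.neighborSet v = Set.univ := by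
  refine Set.eq_of_subset_of_ncard_le (Set.subset_univ _) ?_ (Set.toFinite _)
  simp [(hc.injOn v).ncard_image, hG v]

lemma exists_adj (hc : Proper3EdgeColoring G c) (hG : IsCubic G) (v : V) (k : Fin 3) :
    ∃ w, G.Adj v w ∧ c s(v, w) = k := by
  have hk : k ∈ (fun w => c s(v, w)) '' G.neighborSet v := by simp [hc.image_neighborSet hG]
  exact hk

lemma ncard_neighborSet_colorDelete (hc : Proper3EdgeColoring G c) (hG : IsCubic G) (k : Fin 3)
    (v : V) : ((colorDelete G c k).neighborSet v).ncard = 2 := by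
  have hsub : (colorDelete G c k).neighborSet v ⊆ G.neighborSet v := fun w hw =>
    (colorDelete_adj.1 hw).1
  have himage : (fun w => c s(v, w)) '' (colorDelete G c k).neighborSet v = {k}ᶜ := by
    ext i
    constructor
    · rintro ⟨w, hw, rfl⟩
      exact (colorDelete_adj.1 hw).2
    · intro hi
      obtain ⟨w, hw, rfl⟩ := hc.exists_adj hG v i
      exact ⟨w, colorDelete_adj.2 ⟨hw, hi⟩, rfl⟩
  rw [← ((hc.injOn v).mono hsub).ncard_image, himage, Set.ncard_compl, Set.ncard_singleton]
  simp

lemma exists_cycleFactor [Finite V] (hc : Proper3EdgeColoring G c) (hG : IsCubic G) (k : Fin 3) :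
    ∃ F : CycleFactor G (colorDelete G c k).ConnectedComponent,
      F.edgeSet = (colorDelete G c k).edgeSet :=
  _root_.exists_cycleFactor (deleteEdges_le _) (hc.ncard_neighborSet_colorDelete hG k)

end Proper3EdgeColoring

lemma IsCubic.two_mul_ncard_edgeSet [Fintype V] (hG : IsCubic G) :
    2 * G.edgeSet.ncard = 3 * Fintype.card V := by
  classical
  have hdeg : ∀ v, G.degree v = 3 := fun v => by
    rw [← hG v, ← card_neighborSet_eq_degree, Set.ncard_eq_toFinset_card', Set.toFinset_card]
  have hsum := G.sum_degrees_eq_twice_card_edges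
  simp only [hdeg, Finset.sum_const, Finset.card_univ, smul_eq_mul] at hsum
  rw [← coe_edgeFinset, Set.ncard_coe_finset]
  omega

end Colors

section Genus

lemma card_le_rank_add_one {m n K : Type*} [Finite m] [Fintype n] [Field K] (A : Matrix m n K)
    (hA : ∀ x : n → K, A.mulVec x = 0 → ∀ i j, x i = x j) :
    Fintype.card n ≤ A.rank + 1 := by
  have hker : LinearMap.ker A.mulVecLin ≤ K ∙ (1 : n → K) := by
    intro x hx
    rw [Submodule.mem_span_singleton]
    rcases isEmpty_or_nonempty n with _ | ⟨⟨i⟩⟩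
    · exact ⟨0, Subsingleton.elim _ _⟩
    · exact ⟨x i, funext fun j => by simpa using hA x (by simpa using hx) i j⟩
  have hone := (Submodule.finrank_mono hker).trans (finrank_span_le_card {1})
  have hsum := LinearMap.finrank_range_add_finrank_ker A.mulVecLin
  rw [Module.finrank_fintype_fun_eq_card] at hsum
  simp only [Set.toFinset_singleton, Finset.card_singleton] at hone
  rw [Matrix.rank]
  omega

variable {G : SimpleGraph V} {c : Sym2 V → Fin 3}

lemma eq_of_forall_adj {α : Type*} (hG : G.Preconnected) (f : V → α)
    (h : ∀ u v, G.Adj u v → f u = f v) (u v : V) : f u = f v := by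
  obtain ⟨w⟩ := hG u v
  induction w with
  | nil => rfl
  | cons hadj _ ih => exact (h _ _ hadj).trans ih

open Classical in
variable (G) in
/-- The vertex–edge incidence matrix of `G` over the field with two elements. Its columns are
indexed by the edges only, so that their number is `|E(G)|`. -/
noncomputable def edgeIncidence : Matrix V G.edgeSet (ZMod 2) :=
  Matrix.of fun v e => if v ∈ e.1 then 1 else 0

open Classical in
variable (G c) in
/-- The matrix over the field with two elements whose columns are the indicators of the bicolored
cycles, indexed by a color `k` together with a component of `colorDelete G c k`. -/
noncomputable def bicoloredCycles :
    Matrix G.edgeSet (Σ k, (colorDelete G c k).ConnectedComponent) (ZMod 2) :=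
  Matrix.of fun e x => if c e ≠ x.1 ∧ ∃ v ∈ e.1, (colorDelete G c x.1).connectedComponentMk v = x.2
    then 1 else 0

lemma connectedComponentMk_colorDelete_eq {k : Fin 3} {u v : V} (h : G.Adj u v)
    (hk : c s(u, v) ≠ k) : (colorDelete G c k).connectedComponentMk u =
      (colorDelete G c k).connectedComponentMk v :=
  ConnectedComponent.sound (colorDelete_adj.2 ⟨h, hk⟩).reachable

open Classical in
lemma bicoloredCycles_apply {u v : V} (h : G.Adj u v) (k : Fin 3)
    (K : (colorDelete G c k).ConnectedComponent) :
    bicoloredCycles G c ⟨s(u, v), h⟩ ⟨k, K⟩ =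
      if c s(u, v) ≠ k ∧ (colorDelete G c k).connectedComponentMk u = K then 1 else 0 := by
  rw [bicoloredCycles, Matrix.of_apply]
  refine if_congr (and_congr_right fun hk => ?_) rfl rfl
  simp [← connectedComponentMk_colorDelete_eq h hk]

lemma edgeIncidence_transpose_mulVec [Fintype V] (x : V → ZMod 2) {u v : V} (h : G.Adj u v) :
    (edgeIncidence G).transpose.mulVec x ⟨s(u, v), h⟩ = x u + x v := by
  classical
  have hends : (Finset.univ.filter fun z => z ∈ s(u, v)) = {u, v} := by
    ext z; simp
  simp only [Matrix.mulVec, dotProduct, Matrix.transpose_apply, edgeIncidence, Matrix.of_apply,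
    ite_mul, one_mul, zero_mul]
  rw [← Finset.sum_filter, hends, Finset.sum_pair h.ne]

open Classical in
lemma bicoloredCycles_mulVec [Fintype V]
    (x : (Σ k, (colorDelete G c k).ConnectedComponent) → ZMod 2) {u v : V} (h : G.Adj u v)
    {k l : Fin 3} (hkl : k ≠ l) (hk : k ≠ c s(u, v)) (hl : l ≠ c s(u, v)) :
    (bicoloredCycles G c).mulVec x ⟨s(u, v), h⟩ =
      x ⟨k, (colorDelete G c k).connectedComponentMk u⟩ +
        x ⟨l, (colorDelete G c l).connectedComponentMk u⟩ := by
  have hpair : (Finset.univ.filter fun i => c s(u, v) ≠ i) = {k, l} := by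
    revert hkl hk hl
    generalize c s(u, v) = m
    revert k l m
    decide
  simp only [Matrix.mulVec, dotProduct, Fintype.sum_sigma, bicoloredCycles_apply, ite_mul, one_mul,
    zero_mul, ite_and]
  simp only [Finset.sum_ite_eq, Finset.mem_univ, if_true, Finset.sum_ite_irrel,
    Finset.sum_const_zero]
  rw [← Finset.sum_filter, hpair, Finset.sum_pair hkl]

namespace Proper3EdgeColoring

open Classical in
lemma edgeIncidence_mul_bicoloredCycles [Fintype V] (hc : Proper3EdgeColoring G c)
    (hG : IsCubic G) : edgeIncidence G * bicoloredCycles G c = 0 := by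
  ext v ⟨k, K⟩
  set S := Finset.univ.filter fun e : G.edgeSet => v ∈ e.1 ∧ c e.1 ≠ k ∧
    ∃ u ∈ e.1, (colorDelete G c k).connectedComponentMk u = K with hS
  have hentry : (edgeIncidence G * bicoloredCycles G c) v ⟨k, K⟩ = S.card := by
    rw [hS, Finset.natCast_card_filter, Matrix.mul_apply]
    refine Finset.sum_congr rfl fun e _ => ?_
    simp only [edgeIncidence, bicoloredCycles, Matrix.of_apply, ite_mul, one_mul, zero_mul, ite_and]
    congr
  rw [hentry, Matrix.zero_apply]
  by_cases hv : (colorDelete G c k).connectedComponentMk v = K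
  · have hcard : S.card = 2 := by
      rw [← hc.ncard_neighborSet_colorDelete hG k v, ← Set.ncard_coe_finset]
      symm
      refine Set.ncard_congr (fun w hw => ⟨s(v, w), (colorDelete_adj.1 hw).1⟩) ?_ ?_ ?_
      · intro w hw
        simpa [hS] using ⟨(colorDelete_adj.1 hw).2, Or.inl hv⟩
      · intro a b ha hb hab
        exact Sym2.congr_right.1 (Subtype.ext_iff.1 hab)
      · rintro ⟨e, he⟩ heS
        obtain ⟨hve, hce, -⟩ := (Finset.mem_filter.1 heS).2
        obtain ⟨w, rfl⟩ := Sym2.mem_iff_exists.1 hve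
        exact ⟨w, colorDelete_adj.2 ⟨he, hce⟩, rfl⟩
    rw [hcard]
    decide
  · rw [Finset.card_eq_zero.2, Nat.cast_zero]
    rw [hS, Finset.filter_eq_empty_iff]
    rintro ⟨e, he⟩ - ⟨hve, hce, u, hue, hu⟩
    obtain ⟨w, rfl⟩ := Sym2.mem_iff_exists.1 hve
    rcases Sym2.mem_iff.1 hue with rfl | rfl
    · exact hv hu
    · exact hv ((connectedComponentMk_colorDelete_eq he hce).trans hu)

open Classical in
lemma eq_of_bicoloredCycles_mulVec_eq_zero [Fintype V] (hc : Proper3EdgeColoring G c)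
    (hG : IsCubic G) (hconn : G.Preconnected)
    {x : (Σ k, (colorDelete G c k).ConnectedComponent) → ZMod 2}
    (hx : (bicoloredCycles G c).mulVec x = 0) (i j : Σ k, (colorDelete G c k).ConnectedComponent) :
    x i = x j := by
  let y (k : Fin 3) (u : V) := x ⟨k, (colorDelete G c k).connectedComponentMk u⟩
  have hcolor : ∀ u k l, y k u = y l u := by
    intro u k l
    rcases eq_or_ne k l with rfl | hkl
    · rfl
    obtain ⟨m, hmk, hml⟩ := exists_third_color hkl
    obtain ⟨v, hv, rfl⟩ := hc.exists_adj hG u m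
    rw [← CharTwo.add_eq_zero, ← bicoloredCycles_mulVec x hv hkl hmk.symm hml.symm, hx,
      Pi.zero_apply]
  have hvertex : ∀ u v, y 0 u = y 0 v := by
    refine eq_of_forall_adj hconn _ fun u v huv => ?_
    obtain ⟨k, hk⟩ : ∃ k, k ≠ c s(u, v) := exists_ne _
    rw [hcolor u 0 k, hcolor v 0 k]
    simp only [y, connectedComponentMk_colorDelete_eq huv hk.symm]
  obtain ⟨k, K⟩ := i
  obtain ⟨l, L⟩ := j
  induction K using ConnectedComponent.ind with | _ u
  induction L using ConnectedComponent.ind with | _ v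
  exact (hcolor u k 0).trans ((hvertex u v).trans (hcolor v 0 l))

open Classical in
lemma sum_card_connectedComponent_le [Fintype V] (hc : Proper3EdgeColoring G c) (hG : IsCubic G)
    (hconn : G.Preconnected) :
    2 * ∑ k, Fintype.card (colorDelete G c k).ConnectedComponent ≤ Fintype.card V + 4 := by
  have hvert : Fintype.card V ≤ (edgeIncidence G).rank + 1 := by
    rw [← Matrix.rank_transpose]
    refine card_le_rank_add_one _ fun x hx => eq_of_forall_adj hconn x fun u v huv => ?_
    rw [← CharTwo.add_eq_zero, ← edgeIncidence_transpose_mulVec x huv, hx, Pi.zero_apply]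
  have hcyc := card_le_rank_add_one (bicoloredCycles G c) fun x hx =>
    hc.eq_of_bicoloredCycles_mulVec_eq_zero hG hconn hx
  have hrank := Matrix.rank_add_rank_le_card_of_mul_eq_zero
    (hc.edgeIncidence_mul_bicoloredCycles hG)
  have hedge : Fintype.card G.edgeSet = G.edgeSet.ncard := by
    rw [Set.ncard_eq_toFinset_card', Set.toFinset_card]
  have htwo := hG.two_mul_ncard_edgeSet
  rw [Fintype.card_sigma] at hcyc
  omega

end Proper3EdgeColoring

end Genus

section Tours

variable {G : SimpleGraph V}

variable (G) in
/-- `x` is a closed tour of `G` of length `L`, visiting all vertices. It is unrolled into an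
`L`-periodic sequence, so that segments through the starting point need no special treatment. -/
structure IsTour (x : ℕ → V) (L : ℕ) : Prop where
  adj : ∀ a, G.Adj (x a) (x (a + 1))
  periodic : ∀ a, x (a + L) = x a
  surjOn : ∀ v, ∃ a < L, x a = v

lemma isTour_of_closed_walk {r : V} {w : G.Walk r r} (hnil : ¬ w.Nil)
    (hall : ∀ v, v ∈ w.support) : IsTour G (fun a => w.getVert (a % w.length)) w.length := by
  have hpos : 0 < w.length := Walk.not_nil_iff_lt_length.1 hnil
  refine ⟨fun a => ?_, fun a => by simp, fun v => ?_⟩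
  · convert w.adj_getVert_succ (Nat.mod_lt a hpos) using 1
    by_cases hlast : a % w.length + 1 = w.length
    · have hwrap : (a + 1) % w.length = 0 := by
        rw [← Nat.mod_add_mod, hlast, Nat.mod_self]
      rw [hwrap, hlast, Walk.getVert_zero, Walk.getVert_length]
    · have hlt := Nat.mod_lt a hpos
      congr 1
      rw [Nat.add_mod, Nat.mod_eq_of_lt (a := 1) (by omega), Nat.mod_eq_of_lt (by omega)]
  · obtain ⟨m, hm, hmle⟩ := Walk.mem_support_iff_exists_getVert.1 (hall v)
    rcases hmle.lt_or_eq with hlt | rfl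
    · exact ⟨m, hlt, by simpa only [Nat.mod_eq_of_lt hlt] using hm⟩
    · exact ⟨0, hpos, by simpa using hm⟩

lemma exists_closed_walk_of_adj {x y a b : V} (w : G.Walk x x) (p : G.Walk y y)
    (ha : a ∈ w.support) (hb : b ∈ p.support) (hab : G.Adj a b) :
    ∃ w' : G.Walk a a, w'.length = w.length + p.length + 2 ∧ w.support ⊆ w'.support ∧
      p.support ⊆ w'.support := by
  classical
  refine ⟨(w.rotate a ha).append (Walk.cons hab ((p.rotate b hb).append
    (Walk.cons hab.symm Walk.nil))), ?_, fun v hv => ?_, fun v hv => ?_⟩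
  · simp only [Walk.length_append, Walk.length_cons, Walk.length_nil, Walk.length_rotate]
    omega
  · simp [Walk.mem_support_append_iff, hv]
  · simp [Walk.mem_support_append_iff, hv]

namespace CycleFactor

variable {ι : Type*} (F : CycleFactor G ι)

lemma exists_closed_walk [Fintype ι] (hG : G.Connected) (k : ℕ) (hk : k + 1 ≤ Fintype.card ι) :
    ∃ s : Finset ι, s.card = k + 1 ∧ ∃ (x : V) (w : G.Walk x x),
      (∀ v, F.comp v ∈ s → v ∈ w.support) ∧
      w.length ≤ ∑ i ∈ s, (F.cyc i).length + 2 * k := by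
  classical
  induction k with
  | zero =>
    obtain ⟨i⟩ : Nonempty ι := Fintype.card_pos_iff.1 (by omega)
    exact ⟨{i}, by simp, F.base i, F.cyc i, by simp [F.mem_support], by simp⟩
  | succ k ih =>
    obtain ⟨s, hs, x, w, hw, hlen⟩ := ih (by omega)
    obtain ⟨i, hi⟩ : s.Nonempty := Finset.card_pos.1 (by omega)
    obtain ⟨j, -, hj⟩ : ∃ j ∈ Finset.univ, j ∉ s :=
      Finset.exists_mem_notMem_of_card_lt_card (by rw [Finset.card_univ]; omega)
    obtain ⟨d, -, hfst, hsnd⟩ := (hG.preconnected (F.base i) (F.base j)).some.exists_boundary_dart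
      {v | F.comp v ∈ s} (by simpa [F.comp_base]) (by simpa [F.comp_base])
    obtain ⟨w', hlen', hsub, hsub'⟩ := exists_closed_walk_of_adj w (F.cyc (F.comp d.snd))
      (hw _ hfst) ((F.mem_support _ _).2 rfl) d.adj
    refine ⟨insert (F.comp d.snd) s, by rw [Finset.card_insert_of_notMem hsnd, hs], d.fst, w',
      fun v hv => ?_, by rw [Finset.sum_insert hsnd]; omega⟩
    rcases Finset.mem_insert.1 hv with h | h
    exacts [hsub' ((F.mem_support _ _).2 h), hsub (hw v h)]

lemma exists_isTour [Fintype V] [Fintype ι] (F : CycleFactor G ι) (hG : G.Connected) :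
    ∃ (x : ℕ → V) (L : ℕ), IsTour G x L ∧ L + 2 ≤ Fintype.card V + 2 * Fintype.card ι := by
  obtain ⟨v₀⟩ := hG.nonempty
  have hι : 0 < Fintype.card ι := Fintype.card_pos_iff.2 ⟨F.comp v₀⟩
  obtain ⟨s, hs, r, w, hw, hlen⟩ := F.exists_closed_walk hG (Fintype.card ι - 1) (by omega)
  obtain rfl : s = Finset.univ := Finset.card_eq_iff_eq_univ _ |>.1 (by omega)
  rw [F.sum_length] at hlen
  have hall : ∀ v, v ∈ w.support := fun v => hw v (Finset.mem_univ _)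
  have hnil : ¬ w.Nil := by
    intro hnil
    have heq : ∀ v, v = r := fun v => by
      simpa [Walk.nil_iff_support_eq.1 hnil] using hall v
    have hadj := Walk.adj_snd (F.isCycle (F.comp v₀)).not_nil
    exact hadj.ne ((heq _).trans (heq _).symm)
  exact ⟨_, _, isTour_of_closed_walk hnil hall, by omega⟩

end CycleFactor

end Tours

section Pairings

/-- The sum of the gaps between the first and second, third and fourth, … entry of a list. -/
def pairGap : List ℕ → ℕ
  | a :: b :: l => (b - a) + pairGap l
  | _ => 0

lemma pairGap_add_pairGap_append (e : ℕ) :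
    ∀ (l : List ℕ) (a : ℕ), (a :: l).Pairwise (· ≤ ·) → (∀ b ∈ a :: l, b ≤ e) →
      Even (a :: l).length → pairGap (a :: l) + pairGap (l ++ [e]) = e - a
  | [], a, _, _, heven => by simp at heven
  | [b], a, hsort, he, _ => by
    have hab : a ≤ b := by simpa using hsort
    have hbe := he b (by simp)
    simp only [pairGap, List.cons_append, List.nil_append]
    omega
  | b :: c :: l, a, hsort, he, heven => by
    obtain ⟨ha, hsort⟩ := List.pairwise_cons.1 hsort
    obtain ⟨hb, hc⟩ := List.pairwise_cons.1 hsort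
    have ih := pairGap_add_pairGap_append e l c hc
      (fun x hx => he x (List.mem_cons_of_mem _ (List.mem_cons_of_mem _ hx)))
      (by simpa [Nat.even_add_one] using heven)
    have hab := ha b (by simp)
    have hbc := hb c (by simp)
    have hce := he c (by simp)
    simp only [pairGap, List.cons_append] at ih ⊢
    omega

variable {G : SimpleGraph V} {σ : Sym2 V → Bool}

lemma exists_walk_of_forall_adj {x : ℕ → V} (hx : ∀ a, G.Adj (x a) (x (a + 1))) {a b : ℕ}
    (hab : a ≤ b) : ∃ w : G.Walk (x a) (x b), w.length = b - a := by
  induction b, hab using Nat.le_induction with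
  | base => exact ⟨Walk.nil, by simp⟩
  | succ b hab ih =>
    obtain ⟨w, hw⟩ := ih
    exact ⟨w.concat (hx b), by rw [Walk.length_concat, hw]; omega⟩

namespace CycleFactor

variable {ι : Type*} (F : CycleFactor G ι)

lemma hasSignCover_pairGap {x : ℕ → V} (hx : ∀ a, G.Adj (x a) (x (a + 1))) (t : ι → ℕ) :
    ∀ l : List ι, (∀ i ∈ l, F.comp (x (t i)) = i) → (l.map t).Pairwise (· ≤ ·) →
      Even l.length → l.Nodup → (∀ i ∈ l, walkSign σ (F.cyc i) = 1) →
      HasSignCover G σ (⋃ i ∈ l, (F.cyc i).edgeSet)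
        ((l.map fun i => (F.cyc i).length).sum + pairGap (l.map t))
  | [], _, _, _, _, _ => HasSignCover.empty.mono (by simp) (by simp)
  | [a], _, _, heven, _, _ => by simp at heven
  | i :: j :: l, ht, hsort, heven, hnodup, hsign => by
    have ih := hasSignCover_pairGap hx t l (fun k hk => ht k (by simp [hk]))
      (hsort.sublist (by simp)) (by simpa [Nat.even_add_one] using heven)
      (hnodup.sublist (by simp)) (fun k hk => hsign k (by simp [hk]))
    have hij : i ≠ j := by
      rintro rfl
      simp at hnodup
    obtain ⟨w, hw⟩ := exists_walk_of_forall_adj hx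
      (List.rel_of_pairwise_cons hsort (List.mem_cons_self : t j ∈ t j :: l.map t))
    have hpair := HasSignCover.of_disjoint_unbalanced (F.isCycle _) (F.isCycle _)
      (hsign i (by simp)) (hsign j (by simp)) (F.disjoint_support hij) w
      ((F.mem_support _ _).2 (ht i (by simp))) ((F.mem_support _ _).2 (ht j (by simp)))
    refine (hpair.union ih).mono ?_ ?_
    · simp [Set.union_assoc]
    · simp only [List.map_cons, List.sum_cons, pairGap, hw]
      omega

lemma hasSignCover_pairGap_rotate {x : ℕ → V} {L : ℕ} (hx : IsTour G x L) {t : ι → ℕ} {i : ι}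
    {l : List ι} (htL : ∀ j ∈ i :: l, t j ≤ L) (ht : ∀ j ∈ i :: l, F.comp (x (t j)) = j)
    (hsort : (l.map t).Pairwise (· ≤ ·)) (heven : Even (i :: l).length) (hnodup : (i :: l).Nodup)
    (hsign : ∀ j ∈ i :: l, walkSign σ (F.cyc j) = 1) :
    HasSignCover G σ (⋃ j ∈ i :: l, (F.cyc j).edgeSet)
      (((i :: l).map fun j => (F.cyc j).length).sum + pairGap (l.map t ++ [t i + L])) := by
  classical
  have hperm : (l ++ [i]).Perm (i :: l) := List.perm_append_singleton i l
  set t' := Function.update t i (t i + L)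
  have ht'_ne : ∀ j ∈ l, t' j = t j := fun j hj =>
    Function.update_of_ne (ne_of_mem_of_not_mem hj (List.nodup_cons.1 hnodup).1) _ _
  have ht'_self : t' i = t i + L := Function.update_self _ _ _
  have hmap : (l ++ [i]).map t' = l.map t ++ [t i + L] := by
    simpa [ht'_self] using ht'_ne
  have hvisit : ∀ j ∈ l ++ [i], F.comp (x (t' j)) = j := by
    intro j hj
    rcases List.mem_append.1 hj with hj | hj
    · rw [ht'_ne j hj, ht j (by simp [hj])]
    · rw [List.mem_singleton.1 hj, ht'_self, hx.periodic, ht i (by simp)]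
  have hsort' : ((l ++ [i]).map t').Pairwise (· ≤ ·) := by
    rw [hmap, List.pairwise_append]
    refine ⟨hsort, by simp, fun a ha b hb => ?_⟩
    obtain ⟨j, hj, rfl⟩ := List.mem_map.1 ha
    rw [List.mem_singleton.1 hb]
    exact (htL j (by simp [hj])).trans (Nat.le_add_left _ _)
  have hcov := F.hasSignCover_pairGap hx.adj t' (l ++ [i]) hvisit hsort'
    (by rwa [hperm.length_eq]) (hperm.nodup_iff.2 hnodup)
    (fun j hj => hsign j (hperm.mem_iff.1 hj))
  rw [← hmap, ← (hperm.map _).sum_eq]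
  simpa only [hperm.mem_iff] using hcov

-- The unbalanced cycles are visited at times `t i`, and consecutive ones are paired up. The two
-- ways of doing so along the closed tour have gaps adding up to `L`.
lemma exists_hasSignCover_of_sorted {x : ℕ → V} {L : ℕ} (hx : IsTour G x L) {t : ι → ℕ}
    {l : List ι} (htL : ∀ i ∈ l, t i ≤ L) (ht : ∀ i ∈ l, F.comp (x (t i)) = i)
    (hsort : (l.map t).Pairwise (· ≤ ·)) (heven : Even l.length) (hnodup : l.Nodup)
    (hsign : ∀ i ∈ l, walkSign σ (F.cyc i) = 1) :
    ∃ g, 2 * g ≤ L ∧ HasSignCover G σ (⋃ i ∈ l, (F.cyc i).edgeSet)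
      ((l.map fun i => (F.cyc i).length).sum + g) := by
  have hfirst := F.hasSignCover_pairGap (σ := σ) hx.adj t l ht hsort heven hnodup hsign
  by_cases hgap : 2 * pairGap (l.map t) ≤ L
  · exact ⟨_, hgap, hfirst⟩
  rcases l with _ | ⟨i, l⟩
  · simp [pairGap] at hgap
  have hsecond := F.hasSignCover_pairGap_rotate hx htL ht (List.pairwise_cons.1 hsort).2 heven
    hnodup hsign
  have hle : ∀ b ∈ (i :: l).map t, b ≤ t i + L := by
    intro b hb
    obtain ⟨j, hj, rfl⟩ := List.mem_map.1 hb
    exact (htL j hj).trans (Nat.le_add_left _ _)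
  have hsum : pairGap ((i :: l).map t) + pairGap (l.map t ++ [t i + L]) = t i + L - t i :=
    pairGap_add_pairGap_append (t i + L) (l.map t) (t i) hsort hle (by simpa using heven)
  exact ⟨_, by omega, hsecond⟩

lemma exists_hasSignCover_of_isTour {x : ℕ → V} {L : ℕ} (hx : IsTour G x L) (s : Finset ι)
    (heven : Even s.card) (hsign : ∀ i ∈ s, walkSign σ (F.cyc i) = 1) :
    ∃ g, 2 * g ≤ L ∧ HasSignCover G σ (⋃ i ∈ s, (F.cyc i).edgeSet)
      (∑ i ∈ s, (F.cyc i).length + g) := by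
  choose t htL ht using fun i => hx.surjOn (F.base i)
  set l := s.toList.mergeSort fun i j => t i ≤ t j
  have hperm : l.Perm s.toList := List.mergeSort_perm _ _
  have hmem : ∀ i, i ∈ l ↔ i ∈ s := fun i => hperm.mem_iff.trans Finset.mem_toList
  obtain ⟨g, hg, hcover⟩ := F.exists_hasSignCover_of_sorted (σ := σ) hx (l := l)
    (fun i _ => (htL i).le) (fun i _ => by rw [ht, F.comp_base])
    (List.pairwise_map.2 (by
      simpa using List.pairwise_mergeSort (le := fun i j => t i ≤ t j)
        (by simpa using fun a b c => le_trans) (by simpa using fun a b => le_total _ _) s.toList))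
    (by rwa [hperm.length_eq, Finset.length_toList]) (hperm.nodup_iff.2 s.nodup_toList)
    (fun i hi => hsign i ((hmem i).1 hi))
  refine ⟨g, hg, ?_⟩
  rw [(hperm.map _).sum_eq, Finset.sum_map_toList] at hcover
  simpa only [hmem] using hcover

lemma hasSignCover_of_balanced (s : Finset ι) (hs : ∀ i ∈ s, walkSign σ (F.cyc i) = 0) :
    HasSignCover G σ (⋃ i ∈ s, (F.cyc i).edgeSet) (∑ i ∈ s, (F.cyc i).length) :=
  HasSignCover.biUnion s _ _ fun i hi => HasSignCover.of_balanced_isCycle (F.isCycle i) (hs i hi)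

lemma exists_hasSignCover_of_sum_eq_zero {x : ℕ → V} {L : ℕ} (hx : IsTour G x L) (s : Finset ι)
    (hs : ∑ i ∈ s, walkSign σ (F.cyc i) = 0) :
    ∃ g, 2 * g ≤ L ∧ HasSignCover G σ (⋃ i ∈ s, (F.cyc i).edgeSet)
      (∑ i ∈ s, (F.cyc i).length + g) := by
  classical
  have heven : Even (s.filter fun i => walkSign σ (F.cyc i) = 1).card := by
    rw [← ZMod.natCast_eq_zero_iff_even, natCast_card_filter_eq_one, hs]
  obtain ⟨g, hg, hunb⟩ := F.exists_hasSignCover_of_isTour hx _ heven fun i hi =>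
    (Finset.mem_filter.1 hi).2
  have hbal := F.hasSignCover_of_balanced (σ := σ)
    (s.filter fun i => ¬ walkSign σ (F.cyc i) = 1) fun i hi =>
    zmod_two_ne_one_iff.1 (Finset.mem_filter.1 hi).2
  refine ⟨g, hg, (hunb.union hbal).mono ?_ ?_⟩
  · rw [← Finset.set_biUnion_union, Finset.filter_union_filter_not_eq]
  · rw [← Finset.sum_filter_add_sum_filter_not s fun i => walkSign σ (F.cyc i) = 1]
    omega

end CycleFactor

end Pairings

section Distances

variable {G : SimpleGraph V}

lemma dist_start_getVert_le {x y : V} (w : G.Walk x y) (i : ℕ) : G.dist x (w.getVert i) ≤ i := by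
  refine (dist_le (w.take i)).trans ?_
  rw [Walk.take_length]
  exact min_le_left _ _

lemma dist_getVert_end_le {x y : V} (w : G.Walk x y) (i : ℕ) :
    G.dist (w.getVert i) y ≤ w.length - i := by
  refine (dist_le (w.drop i)).trans ?_
  rw [Walk.drop_length]

/-- The vertices of a walk at positions strictly between `0` and `n`. -/
def innerVertices [DecidableEq V] {x y : V} (w : G.Walk x y) (n : ℕ) : Finset V :=
  (Finset.Ioo 0 n).image w.getVert

lemma card_innerVertices [DecidableEq V] {x y : V} {w : G.Walk x y} (hw : w.IsPath) {n : ℕ}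
    (hn : n ≤ w.length) : (innerVertices w n).card = n - 1 := by
  rw [innerVertices, Finset.card_image_of_injOn, Nat.card_Ioo, Nat.sub_zero]
  intro i hi j hj hij
  have hi := (Finset.mem_Ioo.1 (Finset.mem_coe.1 hi)).2
  have hj := (Finset.mem_Ioo.1 (Finset.mem_coe.1 hj)).2
  exact hw.getVert_injOn (hi.le.trans hn) (hj.le.trans hn) hij

namespace CycleFactor

variable {ι : Type*} (F : CycleFactor G ι) (C : ι → Prop)

/-- `x` and `y` realize the minimum distance between two different cycles of `F` in the class
`C`. -/
structure IsClosestPair (x y : V) : Prop where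
  left : C (F.comp x)
  right : C (F.comp y)
  ne : F.comp x ≠ F.comp y
  dist_le : ∀ x' y', C (F.comp x') → C (F.comp y') → F.comp x' ≠ F.comp y' →
    G.dist x y ≤ G.dist x' y'

variable {F C}

lemma exists_isClosestPair [Finite V] {i j : ι} (hi : C i) (hj : C j) (hij : i ≠ j) :
    ∃ x y, F.IsClosestPair C x y := by
  obtain ⟨⟨x, y⟩, ⟨hx, hy, hne⟩, hmin⟩ := Set.exists_min_image
    {z : V × V | C (F.comp z.1) ∧ C (F.comp z.2) ∧ F.comp z.1 ≠ F.comp z.2}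
    (fun z => G.dist z.1 z.2) (Set.toFinite _)
    ⟨(F.base i, F.base j), by simpa [F.comp_base] using ⟨hi, hj, hij⟩⟩
  exact ⟨x, y, hx, hy, hne, fun x' y' hx' hy' hne' => hmin (x', y') ⟨hx', hy', hne'⟩⟩

namespace IsClosestPair

variable {x y : V}

lemma symm (h : F.IsClosestPair C x y) : F.IsClosestPair C y x :=
  ⟨h.right, h.left, h.ne.symm, by rw [dist_comm]; exact h.dist_le⟩

lemma not_of_mem_innerVertices [DecidableEq V] (h : F.IsClosestPair C x y) {w : G.Walk x y}
    (hw : w.length = G.dist x y) {v : V} (hv : v ∈ innerVertices w (G.dist x y)) :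
    ¬ C (F.comp v) := by
  obtain ⟨i, hi, rfl⟩ := Finset.mem_image.1 hv
  obtain ⟨hpos, hlt⟩ := Finset.mem_Ioo.1 hi
  intro hC
  by_cases hx : F.comp x = F.comp (w.getVert i)
  · have hmin := h.dist_le _ y hC h.right (hx ▸ h.ne)
    have hle := dist_getVert_end_le w i
    omega
  · have hmin := h.dist_le x _ h.left hC hx
    have hle := dist_start_getVert_le w i
    omega

-- `z` is a vertex of its cycle nearest to `x`, and `q` is a shortest path from `z` to `x`. The
-- first half of `q` is closer to `z` than the minimum distance.
lemma not_of_mem_innerVertices_half [DecidableEq V] (h : F.IsClosestPair C x y) {z : V}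
    (hz : C (F.comp z)) (hzx : F.comp z ≠ F.comp x)
    (hzmin : ∀ z', F.comp z' = F.comp z → G.dist z x ≤ G.dist z' x)
    {q : G.Walk z x} (hq : q.length = G.dist z x) {v : V}
    (hv : v ∈ innerVertices q ((G.dist x y + 1) / 2)) : ¬ C (F.comp v) := by
  obtain ⟨i, hi, rfl⟩ := Finset.mem_image.1 hv
  obtain ⟨hpos, hlt⟩ := Finset.mem_Ioo.1 hi
  intro hC
  by_cases hz' : F.comp z = F.comp (q.getVert i)
  · have hmin := hzmin _ hz'.symm
    have hle := dist_getVert_end_le q i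
    have hzx := h.dist_le z x hz h.left hzx
    omega
  · have hmin := h.dist_le z _ hz hC hz'
    have hle := dist_start_getVert_le q i
    omega

lemma disjoint_innerVertices [DecidableEq V] (h : F.IsClosestPair C x y) (hG : G.Connected)
    {z : V} (hz : C (F.comp z)) (hzx : F.comp z ≠ F.comp x) (hzy : F.comp z ≠ F.comp y)
    {w : G.Walk x y} (hw : w.length = G.dist x y) (q : G.Walk z x) :
    Disjoint (innerVertices w (G.dist x y)) (innerVertices q ((G.dist x y + 1) / 2)) := by
  rw [Finset.disjoint_left]
  intro v hvw hvq
  obtain ⟨i, hi, rfl⟩ := Finset.mem_image.1 hvq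
  obtain ⟨j, hj, hij⟩ := Finset.mem_image.1 hvw
  have hi := Finset.mem_Ioo.1 hi
  have hj := Finset.mem_Ioo.1 hj
  have hzv := dist_start_getVert_le q i
  have hxv := dist_start_getVert_le w j
  have hvy := dist_getVert_end_le w j
  rw [hij] at hvy
  rw [hij, dist_comm] at hxv
  have hx := hG.dist_triangle (u := z) (v := q.getVert i) (w := x)
  have hy := hG.dist_triangle (u := z) (v := q.getVert i) (w := y)
  have hminx := h.dist_le z x hz h.left hzx
  have hminy := h.dist_le z y hz h.right hzy
  omega

lemma sum_length_add_le [Fintype V] (h : F.IsClosestPair C x y) (hG : G.Connected) {k : ι}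
    (hk : C k) (hkx : k ≠ F.comp x) (hky : k ≠ F.comp y) :
    (F.cyc (F.comp x)).length + (F.cyc (F.comp y)).length + (F.cyc k).length +
      (G.dist x y - 1) + ((G.dist x y + 1) / 2 - 1) ≤ Fintype.card V := by
  classical
  obtain ⟨z, rfl, hzmin⟩ := Set.exists_min_image {z | F.comp z = k} (fun z => G.dist z x)
    (Set.toFinite _) ⟨F.base k, F.comp_base k⟩
  obtain ⟨w, hw, hwlen⟩ := hG.exists_path_of_dist x y
  obtain ⟨q, hq, hqlen⟩ := hG.exists_path_of_dist z x
  have hzx := h.dist_le z x hk h.left hkx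
  set W := innerVertices w (G.dist x y) ∪ innerVertices q ((G.dist x y + 1) / 2) with hW
  have hWcard : W.card = (G.dist x y - 1) + ((G.dist x y + 1) / 2 - 1) := by
    rw [hW, Finset.card_union_of_disjoint (h.disjoint_innerVertices hG hk hkx hky hwlen q),
      card_innerVertices hw hwlen.ge, card_innerVertices hq (by omega)]
  have hWC : ∀ v ∈ W, ¬ C (F.comp v) := fun v hv => (Finset.mem_union.1 hv).elim
    (h.not_of_mem_innerVertices hwlen) (h.not_of_mem_innerVertices_half hk hkx hzmin hqlen)
  set cls : ι → Finset V := fun i => Finset.univ.filter fun v => F.comp v = i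
  have hcls : ∀ {i j}, i ≠ j → Disjoint (cls i) (cls j) := fun hij =>
    Finset.disjoint_filter.2 fun v _ hi hj => hij (hi.symm.trans hj)
  have hdisj : ∀ {i}, C i → Disjoint (cls i) W := fun hi => Finset.disjoint_left.2 fun v hv hvW =>
    hWC v hvW ((Finset.mem_filter.1 hv).2 ▸ hi)
  have hcard := Finset.card_le_univ (cls (F.comp x) ∪ cls (F.comp y) ∪ cls (F.comp z) ∪ W)
  rw [Finset.card_union_of_disjoint, Finset.card_union_of_disjoint, Finset.card_union_of_disjoint
    (hcls h.ne), ← F.length_eq_card, ← F.length_eq_card, ← F.length_eq_card, hWcard] at hcard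
  · omega
  · exact Finset.disjoint_union_left.2 ⟨hcls hkx.symm, hcls hky.symm⟩
  · exact Finset.disjoint_union_left.2
      ⟨Finset.disjoint_union_left.2 ⟨hdisj h.left, hdisj h.right⟩, hdisj hk⟩

end IsClosestPair

-- Two closest cycles leave room for a third one together with the paths to it, so the smaller of
-- the two and the path between them are short.
lemma exists_close_pair [Fintype V] (hG : G.Connected) {i j : ι} (hi : C i) (hj : C j)
    (hij : i ≠ j) (hthird : ∀ i j, ∃ k, C k ∧ k ≠ i ∧ k ≠ j) :
    ∃ x y, C (F.comp x) ∧ C (F.comp y) ∧ F.comp x ≠ F.comp y ∧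
      3 * ((F.cyc (F.comp y)).length + G.dist x y) ≤ 2 * Fintype.card V := by
  obtain ⟨x, y, h, hle⟩ : ∃ x y, F.IsClosestPair C x y ∧
      (F.cyc (F.comp y)).length ≤ (F.cyc (F.comp x)).length := by
    obtain ⟨x, y, h⟩ := exists_isClosestPair (F := F) hi hj hij
    rcases le_total (F.cyc (F.comp y)).length (F.cyc (F.comp x)).length with hle | hle
    exacts [⟨x, y, h, hle⟩, ⟨y, x, h.symm, hle⟩]
  obtain ⟨k, hk, hkx, hky⟩ := hthird (F.comp x) (F.comp y)
  have hsum := h.sum_length_add_le hG hk hkx hky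
  have hthree := (F.isCycle k).three_le_length
  exact ⟨x, y, h.left, h.right, h.ne, by omega⟩

end CycleFactor

end Distances

section ColorSigns

variable {G : SimpleGraph V} {σ : Sym2 V → Bool} {c : Sym2 V → Fin 3}

open Classical in
variable (G σ c) in
/-- The total sign of the edges whose color differs from `k`, that is, of the 2-factor
`colorDelete G c k`. -/
noncomputable def colorSign [Fintype V] (k : Fin 3) : ZMod 2 :=
  ∑ e ∈ G.edgeFinset, if c e ≠ k then edgeSign σ e else 0

lemma sum_colorSign [Fintype V] : ∑ k, colorSign G σ c k = 0 := by
  classical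
  simp only [colorSign]
  rw [Finset.sum_comm]
  refine Finset.sum_eq_zero fun e _ => ?_
  generalize edgeSign σ e = s
  generalize c e = i
  revert s i
  decide

lemma CycleFactor.sum_walkSign_eq_colorSign {ι : Type*} [Fintype V] [Fintype ι]
    (F : CycleFactor G ι) {k : Fin 3} (hF : F.edgeSet = (colorDelete G c k).edgeSet) :
    ∑ i, walkSign σ (F.cyc i) = colorSign G σ c k := by
  classical
  rw [colorSign, ← Finset.sum_filter]
  refine F.sum_walkSign _ ?_
  ext e
  rw [hF, mem_edgeSet_colorDelete]
  simp

lemma exists_colorSign_eq_one [Fintype V] (h : ∃ l, colorSign G σ c l ≠ 0) :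
    ∃ i j k, i ≠ j ∧ k ≠ i ∧ k ≠ j ∧
      colorSign G σ c i = 1 ∧ colorSign G σ c j = 1 ∧ colorSign G σ c k = 0 := by
  have hsum := sum_colorSign (G := G) (σ := σ) (c := c)
  revert h hsum
  generalize colorSign G σ c = f
  revert f
  decide

namespace Proper3EdgeColoring

lemma exists_isTour [Fintype V] (hc : Proper3EdgeColoring G c) (hG : IsCubic G)
    (hconn : G.Connected) : ∃ x L, IsTour G x L ∧ 3 * L + 2 ≤ 4 * Fintype.card V := by
  classical
  have hsum := hc.sum_card_connectedComponent_le hG hconn.preconnected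
  obtain ⟨k, hk⟩ : ∃ k, 6 * Fintype.card (colorDelete G c k).ConnectedComponent ≤
      Fintype.card V + 4 := by
    by_contra! h
    rw [Fin.sum_univ_three] at hsum
    have := h 0
    have := h 1
    have := h 2
    omega
  obtain ⟨F, -⟩ := hc.exists_cycleFactor hG k
  obtain ⟨x, L, hx, hL⟩ := F.exists_isTour hconn
  exact ⟨x, L, hx, by omega⟩

lemma exists_hasSignCover_colorDelete [Fintype V] (hc : Proper3EdgeColoring G c) (hG : IsCubic G)
    {x : ℕ → V} {L : ℕ} (hx : IsTour G x L) {k : Fin 3} (hk : colorSign G σ c k = 0) :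
    ∃ g, 2 * g ≤ L ∧ HasSignCover G σ (colorDelete G c k).edgeSet (Fintype.card V + g) := by
  classical
  obtain ⟨F, hF⟩ := hc.exists_cycleFactor hG k
  obtain ⟨g, hg, hcov⟩ := F.exists_hasSignCover_of_sum_eq_zero hx Finset.univ
    ((F.sum_walkSign_eq_colorSign hF).trans hk)
  rw [F.sum_length] at hcov
  exact ⟨g, hg, hcov.mono (by simp [← hF, CycleFactor.edgeSet]) le_rfl⟩

lemma edgeSet_subset_union_colorDelete {i j : Fin 3} (hij : i ≠ j) :
    G.edgeSet ⊆ (colorDelete G c i).edgeSet ∪ (colorDelete G c j).edgeSet := by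
  intro e he
  by_cases hi : c e = i
  · exact Or.inr (mem_edgeSet_colorDelete.2 ⟨he, hi ▸ hij⟩)
  · exact Or.inl (mem_edgeSet_colorDelete.2 ⟨he, hi⟩)

lemma exists_hasSignCover_of_colorSign_eq_zero [Fintype V] (hc : Proper3EdgeColoring G c)
    (hG : IsCubic G) (hconn : G.Connected) (h : ∀ k, colorSign G σ c k = 0) :
    ∃ m, HasSignCover G σ G.edgeSet m ∧ 3 * m ≤ 10 * Fintype.card V := by
  obtain ⟨x, L, hx, hL⟩ := hc.exists_isTour hG hconn
  obtain ⟨g₀, hg₀, hcov₀⟩ := hc.exists_hasSignCover_colorDelete hG hx (h 0)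
  obtain ⟨g₁, hg₁, hcov₁⟩ := hc.exists_hasSignCover_colorDelete hG hx (h 1)
  exact ⟨_, (hcov₀.union hcov₁).mono (edgeSet_subset_union_colorDelete (by decide)) le_rfl,
    by omega⟩

end Proper3EdgeColoring

end ColorSigns

section KempeSwaps

variable {G : SimpleGraph V} {σ : Sym2 V → Bool} {c : Sym2 V → Fin 3}

open Classical in
variable (c) in
/-- The coloring obtained from `c` by exchanging the colors `i` and `j` on `S`, which in
applications is the edge set of a cycle colored with `i` and `j`. -/
noncomputable def kempeSwap (i j : Fin 3) (S : Set (Sym2 V)) (e : Sym2 V) : Fin 3 :=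
  if e ∈ S then Equiv.swap i j (c e) else c e

lemma kempeSwap_of_mem {i j : Fin 3} {S : Set (Sym2 V)} {e : Sym2 V} (he : e ∈ S) :
    kempeSwap c i j S e = Equiv.swap i j (c e) := if_pos he

lemma kempeSwap_of_notMem {i j : Fin 3} {S : Set (Sym2 V)} {e : Sym2 V} (he : e ∉ S) :
    kempeSwap c i j S e = c e := if_neg he

lemma kempeSwap_eq_iff {i j k : Fin 3} (hki : k ≠ i) (hkj : k ≠ j) {S : Set (Sym2 V)}
    {e : Sym2 V} : kempeSwap c i j S e = k ↔ c e = k := by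
  by_cases he : e ∈ S
  · rw [kempeSwap_of_mem he, ← Equiv.eq_symm_apply, Equiv.symm_swap,
      Equiv.swap_apply_of_ne_of_ne hki hkj]
  · rw [kempeSwap_of_notMem he]

lemma proper3EdgeColoring_kempeSwap (hc : Proper3EdgeColoring G c) {i j k : Fin 3}
    (hki : k ≠ i) (hkj : k ≠ j) {S : Set (Sym2 V)} (hS : ∀ e ∈ S, c e ≠ k)
    (hboundary : ∀ e ∈ S, ∀ f ∈ G.edgeSet, (∃ x, x ∈ e ∧ x ∈ f) → f ∉ S → c f = k) :
    Proper3EdgeColoring G (kempeSwap c i j S) := by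
  have hmixed : ∀ e ∈ S, ∀ f ∈ G.edgeSet, f ∉ S → (∃ x, x ∈ e ∧ x ∈ f) →
      kempeSwap c i j S e ≠ kempeSwap c i j S f := by
    intro e he f hf hfS hx
    rw [(kempeSwap_eq_iff hki hkj).2 (hboundary e he f hf hx hfS)]
    exact mt (kempeSwap_eq_iff hki hkj).1 (hS e he)
  intro e he f hf hne hx
  by_cases heS : e ∈ S <;> by_cases hfS : f ∈ S
  · rw [kempeSwap_of_mem heS, kempeSwap_of_mem hfS]
    exact (Equiv.injective _).ne (hc e he f hf hne hx)
  · exact hmixed e heS f hf hfS hx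
  · exact (hmixed f hfS e he heS (hx.imp fun _ => And.symm)).symm
  · rw [kempeSwap_of_notMem heS, kempeSwap_of_notMem hfS]
    exact hc e he f hf hne hx

lemma colorSign_kempeSwap_of_ne [Fintype V] {i j k : Fin 3} (hki : k ≠ i) (hkj : k ≠ j)
    {S : Set (Sym2 V)} : colorSign G σ (kempeSwap c i j S) k = colorSign G σ c k := by
  simp only [colorSign, ne_eq, kempeSwap_eq_iff hki hkj]

lemma colorSign_kempeSwap [Fintype V] {i j k m : Fin 3} (hij : i ≠ j) (hki : k ≠ i) (hkj : k ≠ j)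
    (hm : m = i ∨ m = j) {u : V} {p : G.Walk u u} (hp : p.IsTrail)
    (hpk : ∀ e ∈ p.edges, c e ≠ k) :
    colorSign G σ (kempeSwap c i j p.edgeSet) m = colorSign G σ c m + walkSign σ p := by
  have hswap : ∀ {i j k l m : Fin 3}, i ≠ j → k ≠ i → k ≠ j → (m = i ∨ m = j) → l ≠ k →
      ∀ s : ZMod 2, (if Equiv.swap i j l ≠ m then s else 0) - (if l ≠ m then s else 0) = s := by
    decide
  classical
  rw [← sub_eq_iff_eq_add', colorSign, colorSign, ← Finset.sum_sub_distrib, walkSign,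
    ← List.sum_toFinset _ hp.edges_nodup]
  refine (Finset.sum_subset_zero_on_sdiff (fun e he => ?_) (fun e he => ?_) (fun e he => ?_)).symm
  · exact mem_edgeFinset.2 (Walk.edges_subset_edgeSet _ (List.mem_toFinset.1 he))
  · have hmem : e ∉ p.edgeSet := fun h => (Finset.mem_sdiff.1 he).2 (List.mem_toFinset.2 h)
    rw [kempeSwap_of_notMem hmem, sub_self]
  · have hmem := List.mem_toFinset.1 he
    have hcolor := hpk e hmem
    rw [kempeSwap_of_mem (S := p.edgeSet) hmem]
    exact (hswap hij hki hkj hm hcolor _).symm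

lemma CycleFactor.color_eq_of_notMem {ι : Type*} (F : CycleFactor G ι) {k : Fin 3}
    (hF : F.edgeSet = (colorDelete G c k).edgeSet) {X : ι} {e f : Sym2 V}
    (he : e ∈ (F.cyc X).edgeSet) (hf : f ∈ G.edgeSet) (hx : ∃ x, x ∈ e ∧ x ∈ f)
    (hfX : f ∉ (F.cyc X).edgeSet) : c f = k := by
  by_contra hfk
  obtain ⟨x, hxe, hxf⟩ := hx
  obtain ⟨Y, hY⟩ : ∃ Y, f ∈ (F.cyc Y).edgeSet :=
    Set.mem_iUnion.1 (hF.superset (mem_edgeSet_colorDelete.2 ⟨hf, hfk⟩))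
  have hXY : X = Y := ((F.mem_support X x).1 (Walk.mem_support_of_mem_edges he hxe)).symm.trans
    ((F.mem_support Y x).1 (Walk.mem_support_of_mem_edges hY hxf))
  exact hfX (hXY ▸ hY)

lemma Proper3EdgeColoring.exists_hasSignCover_of_walkSign_eq_one [Fintype V]
    (hc : Proper3EdgeColoring G c) (hG : IsCubic G) (hconn : G.Connected) {i j k : Fin 3}
    (hij : i ≠ j) (hki : k ≠ i) (hkj : k ≠ j) (hi : colorSign G σ c i = 1)
    (hj : colorSign G σ c j = 1) (hk : colorSign G σ c k = 0) {ι : Type*} (F : CycleFactor G ι)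
    (hF : F.edgeSet = (colorDelete G c k).edgeSet) {X : ι} (hX : walkSign σ (F.cyc X) = 1) :
    ∃ m, HasSignCover G σ G.edgeSet m ∧ 3 * m ≤ 10 * Fintype.card V := by
  have hXk : ∀ e ∈ (F.cyc X).edges, c e ≠ k := fun e he =>
    (mem_edgeSet_colorDelete.1 (hF.subset (Set.mem_iUnion.2 ⟨X, he⟩))).2
  have hc' := proper3EdgeColoring_kempeSwap (S := (F.cyc X).edgeSet) hc hki hkj hXk fun e he f hf =>
    F.color_eq_of_notMem hF he hf
  refine hc'.exists_hasSignCover_of_colorSign_eq_zero hG hconn fun l => ?_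
  have hflip := fun m hm =>
    colorSign_kempeSwap (σ := σ) hij hki hkj (m := m) hm (F.isCycle X).isTrail hXk
  have hl : l = i ∨ l = j ∨ l = k := by
    clear * - hij hki hkj
    revert i j k l
    decide
  rcases hl with rfl | rfl | rfl
  · rw [hflip l (Or.inl rfl), hi, hX, CharTwo.add_self_eq_zero]
  · rw [hflip l (Or.inr rfl), hj, hX, CharTwo.add_self_eq_zero]
  · rw [colorSign_kempeSwap_of_ne hki hkj, hk]

end KempeSwaps

section OddFactors

variable {G : SimpleGraph V} {σ : Sym2 V → Bool}

lemma exists_ne_ne_of_sum_eq_one {ι : Type*} [Fintype ι] {f : ι → ZMod 2} (hf : ∑ i, f i = 1)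
    {a b : ι} (ha : f a = 1) (hb : f b = 1) (hab : a ≠ b) (i j : ι) :
    ∃ k, f k = 1 ∧ k ≠ i ∧ k ≠ j := by
  classical
  set s := Finset.univ.filter fun k => f k = 1 with hs
  have hodd : Odd s.card := by
    rw [← ZMod.natCast_eq_one_iff_odd, hs, natCast_card_filter_eq_one, hf]
  have htwo : 1 < s.card := Finset.one_lt_card.2 ⟨a, by simp [hs, ha], b, by simp [hs, hb], hab⟩
  obtain ⟨k, hk, hkij⟩ := Finset.exists_mem_notMem_of_card_lt_card
    (s := {i, j}) (t := s) (Finset.card_le_two.trans_lt (by grind))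
  simp only [Finset.mem_insert, Finset.mem_singleton, not_or] at hkij
  exact ⟨k, (Finset.mem_filter.1 hk).2, hkij⟩

namespace CycleFactor

variable {ι : Type*} (F : CycleFactor G ι)

lemma hasSignCover_edgeSet [Fintype ι] [DecidableEq ι] (D : ι) {a b : ℕ}
    (ha : HasSignCover G σ (⋃ i ∈ Finset.univ.erase D, (F.cyc i).edgeSet) a)
    (hb : HasSignCover G σ (F.cyc D).edgeSet b) : HasSignCover G σ F.edgeSet (a + b) := by
  refine (ha.union hb).mono (fun e he => ?_) le_rfl
  obtain ⟨i, hi⟩ := Set.mem_iUnion.1 he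
  rcases eq_or_ne i D with rfl | hiD
  · exact Or.inr hi
  · exact Or.inl (Set.mem_biUnion (Finset.mem_erase.2 ⟨hiD, Finset.mem_univ i⟩) hi)

lemma exists_hasSignCover_of_two_unbalanced [Fintype V] [Fintype ι] (hconn : G.Connected)
    (hsum : ∑ i, walkSign σ (F.cyc i) = 1) {x : ℕ → V} {L : ℕ} (hx : IsTour G x L)
    (hL : 3 * L + 2 ≤ 4 * Fintype.card V) {i j : ι} (hi : walkSign σ (F.cyc i) = 1)
    (hj : walkSign σ (F.cyc j) = 1) (hij : i ≠ j) :
    ∃ m, HasSignCover G σ F.edgeSet m ∧ 3 * m ≤ 7 * Fintype.card V := by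
  classical
  obtain ⟨u, v, hu, hv, huv, hclose⟩ := F.exists_close_pair
    (C := fun i => walkSign σ (F.cyc i) = 1) hconn hi hj hij
    (exists_ne_ne_of_sum_eq_one hsum hi hj hij)
  have hrest : ∑ i ∈ Finset.univ.erase (F.comp u), walkSign σ (F.cyc i) = 0 := by
    rw [Finset.sum_erase_eq_sub (Finset.mem_univ _), hsum, hu, sub_self]
  obtain ⟨g, hg, hcov⟩ := F.exists_hasSignCover_of_sum_eq_zero hx _ hrest
  obtain ⟨w, -, hw⟩ := hconn.exists_path_of_dist u v
  have hbarbell := HasSignCover.of_disjoint_unbalanced (F.isCycle _) (F.isCycle _) hu hv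
    (F.disjoint_support huv) w ((F.mem_support _ _).2 rfl) ((F.mem_support _ _).2 rfl)
  have hlength := Finset.add_sum_erase _ (fun i => (F.cyc i).length) (Finset.mem_univ (F.comp u))
  rw [F.sum_length] at hlength
  exact ⟨_, F.hasSignCover_edgeSet _ hcov (hbarbell.mono Set.subset_union_left le_rfl), by omega⟩

lemma exists_hasSignCover_of_sum_eq_one [Fintype V] [Fintype ι] (hconn : G.Connected)
    (hsum : ∑ i, walkSign σ (F.cyc i) = 1) {x : ℕ → V} {L : ℕ} (hx : IsTour G x L)
    (hL : 3 * L + 2 ≤ 4 * Fintype.card V)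
    (hcycle : ∀ r, ∀ p : G.Walk r r, p.IsCycle → walkSign σ p = 1 →
      ∃ m, HasSignCover G σ p.edgeSet m ∧ 3 * m ≤ 4 * Fintype.card V + 3 * p.length) :
    ∃ m, HasSignCover G σ F.edgeSet m ∧ 3 * m ≤ 7 * Fintype.card V := by
  classical
  obtain ⟨D, hD⟩ : ∃ D, walkSign σ (F.cyc D) = 1 := by
    by_contra! h
    rw [Finset.sum_eq_zero fun i _ => zmod_two_ne_one_iff.1 (h i)] at hsum
    exact zero_ne_one hsum
  by_cases hU : ∃ U, walkSign σ (F.cyc U) = 1 ∧ U ≠ D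
  · obtain ⟨U, hU, hUD⟩ := hU
    exact F.exists_hasSignCover_of_two_unbalanced hconn hsum hx hL hU hD hUD
  push Not at hU
  have hrest := F.hasSignCover_of_balanced (Finset.univ.erase D) fun i hi =>
    zmod_two_ne_one_iff.1 fun h => (Finset.mem_erase.1 hi).1 (hU i h)
  obtain ⟨m, hm, hle⟩ := hcycle _ _ (F.isCycle D) hD
  have hlength := Finset.add_sum_erase _ (fun i => (F.cyc i).length) (Finset.mem_univ D)
  rw [F.sum_length] at hlength
  exact ⟨_, F.hasSignCover_edgeSet D hrest hm, by omega⟩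

end CycleFactor

-- If the bicolored cycles avoiding `k` are all balanced they cover themselves; otherwise a Kempe
-- swap along an unbalanced one makes all three color signs vanish.
lemma Proper3EdgeColoring.exists_hasSignCover_of_isCycle [Fintype V] {c : Sym2 V → Fin 3}
    (hc : Proper3EdgeColoring G c) (hG : IsCubic G) (hconn : G.Connected)
    (hcycle : ∀ r, ∀ p : G.Walk r r, p.IsCycle → walkSign σ p = 1 →
      ∃ m, HasSignCover G σ p.edgeSet m ∧ 3 * m ≤ 4 * Fintype.card V + 3 * p.length) :
    ∃ m, HasSignCover G σ G.edgeSet m ∧ 3 * m ≤ 10 * Fintype.card V := by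
  classical
  by_cases heven : ∀ k, colorSign G σ c k = 0
  · exact hc.exists_hasSignCover_of_colorSign_eq_zero hG hconn heven
  obtain ⟨i, j, k, hij, hki, hkj, hi, hj, hk⟩ := exists_colorSign_eq_one (not_forall.1 heven)
  obtain ⟨F, hF⟩ := hc.exists_cycleFactor hG k
  by_cases hX : ∃ X, walkSign σ (F.cyc X) = 1
  · obtain ⟨X, hX⟩ := hX
    exact hc.exists_hasSignCover_of_walkSign_eq_one hG hconn hij hki hkj hi hj hk F hF hX
  push Not at hX
  have hcovk := F.hasSignCover_of_balanced Finset.univ fun X _ => zmod_two_ne_one_iff.1 (hX X)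
  obtain ⟨E, hE⟩ := hc.exists_cycleFactor hG j
  obtain ⟨x, L, hx, hL⟩ := hc.exists_isTour hG hconn
  obtain ⟨m, hcovj, hm⟩ := E.exists_hasSignCover_of_sum_eq_one hconn
    ((E.sum_walkSign_eq_colorSign hE).trans hj) hx hL hcycle
  refine ⟨_, (hcovk.union hcovj).mono ?_ le_rfl, ?_⟩
  · have hunion : ⋃ X ∈ Finset.univ, (F.cyc X).edgeSet = (colorDelete G c k).edgeSet := by
      simp [← hF, CycleFactor.edgeSet]
    rw [hE, hunion]
    exact edgeSet_subset_union_colorDelete hkj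
  · rw [F.sum_length]
    omega

end OddFactors

section Potentials

variable {G : SimpleGraph V} {σ : Sym2 V → Bool}

lemma walkSign_eq_edgeSign_of_isPath (h : ∀ r, ∀ q : G.Walk r r, q.IsCycle → walkSign σ q = 0)
    {u v : V} (huv : G.Adj u v) {p : G.Walk v u} (hp : p.IsPath) :
    walkSign σ p = edgeSign σ s(u, v) := by
  by_cases he : s(u, v) ∈ p.edges
  · have hlen := hp.length_eq_one_of_mem_edges (by rwa [Sym2.eq_swap])
    obtain ⟨hadj, rfl⟩ : ∃ hadj : G.Adj v u, p = Walk.cons hadj Walk.nil := by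
      cases p with
      | nil => simp at hlen
      | cons hadj q => cases q with
        | nil => exact ⟨hadj, rfl⟩
        | cons => simp at hlen
    simp [Sym2.eq_swap]
  · have hcycle := h _ _ ((Walk.cons_isCycle_iff p huv).2 ⟨hp, he⟩)
    rw [walkSign_cons] at hcycle
    exact (CharTwo.add_eq_zero.1 hcycle).symm

lemma walkSign_bypass [DecidableEq V]
    (h : ∀ r, ∀ q : G.Walk r r, q.IsCycle → walkSign σ q = 0) {u v : V} (w : G.Walk u v) :
    walkSign σ w.bypass = walkSign σ w := by
  induction w with
  | nil => rfl
  | @cons u v' v hadj p ih =>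
    rw [Walk.bypass, walkSign_cons, ← ih]
    split_ifs with hu
    · have hsplit := congrArg (walkSign σ) (p.bypass.take_spec hu)
      rw [walkSign_append,
        walkSign_eq_edgeSign_of_isPath h hadj ((p.bypass_isPath).takeUntil hu)] at hsplit
      rw [← hsplit, CharTwo.add_cancel_left]
    · rw [walkSign_cons]

lemma walkSign_eq_zero_of_closed (h : ∀ r, ∀ q : G.Walk r r, q.IsCycle → walkSign σ q = 0)
    {u : V} (w : G.Walk u u) : walkSign σ w = 0 := by
  classical
  rw [← walkSign_bypass h, (Walk.isPath_iff_nil.1 w.bypass_isPath).eq_nil, walkSign_nil]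

-- The potential of `v` is the sign of a walk to `v` from the representative of its component.
lemma exists_potential (h : ∀ r, ∀ q : G.Walk r r, q.IsCycle → walkSign σ q = 0) :
    ∃ g : V → ZMod 2, ∀ u v, G.Adj u v → edgeSign σ s(u, v) = g u + g v := by
  have hreach (v : V) : G.Reachable (G.connectedComponentMk v).out v :=
    ConnectedComponent.exact (Quot.out_eq _)
  refine ⟨fun v => walkSign σ (hreach v).some, fun u v huv => ?_⟩
  have hsum : ∀ {r s : V} (p : G.Walk r u) (q : G.Walk s v), r = s →
      edgeSign σ s(u, v) = walkSign σ p + walkSign σ q := by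
    rintro r - p q rfl
    have hclosed := walkSign_eq_zero_of_closed h (p.append (Walk.cons huv q.reverse))
    rw [walkSign_append, walkSign_cons, walkSign_reverse, add_left_comm] at hclosed
    exact CharTwo.add_eq_zero.1 hclosed
  exact hsum _ _ (by rw [ConnectedComponent.sound huv.reachable])

lemma walkSign_eq_add {g : V → ZMod 2}
    (hg : ∀ u v, G.Adj u v → edgeSign σ s(u, v) = g u + g v) {u v : V} (w : G.Walk u v) :
    walkSign σ w = g u + g v := by
  induction w with
  | nil => rw [walkSign_nil, CharTwo.add_self_eq_zero]
  | cons hadj w ih => rw [walkSign_cons, hg _ _ hadj, ih, add_assoc, CharTwo.add_cancel_left]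

end Potentials

section PeriodicCycles

variable {G : SimpleGraph V} {x : ℕ → V} {d : ℕ}

variable (G) in
/-- A cycle of length `d`, presented as a `d`-periodic sequence of vertices so that arcs running
past the starting point need no special treatment. -/
structure PeriodicCycle (x : ℕ → V) (d : ℕ) : Prop where
  three_le : 3 ≤ d
  periodic : Function.Periodic x d
  adj : ∀ a, G.Adj (x a) (x (a + 1))
  modEq : ∀ {a b}, x a = x b → a ≡ b [MOD d]

/-- The `k`-th edge of the sequence of vertices `x`. -/
def stepEdge (x : ℕ → V) (k : ℕ) : Sym2 V := s(x k, x (k + 1))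

/-- The set of edges of the sequence `x` between the positions `a` and `b`. -/
def arcEdges (x : ℕ → V) (a b : ℕ) : Set (Sym2 V) := stepEdge x '' Set.Ico a b

variable (G) in
/-- The graph obtained from `G` by deleting the edges of the closed sequence `x`. -/
def offCycle (x : ℕ → V) : SimpleGraph V := G.deleteEdges (Set.range (stepEdge x))

lemma offCycle_le (x : ℕ → V) : offCycle G x ≤ G := deleteEdges_le _

lemma offCycle_adj {u v : V} :
    (offCycle G x).Adj u v ↔ G.Adj u v ∧ ∀ k, s(u, v) ≠ stepEdge x k := by
  simp [offCycle, deleteEdges_adj, eq_comm]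

lemma arcEdges_union {a b c : ℕ} (hab : a ≤ b) (hbc : b ≤ c) :
    arcEdges x a b ∪ arcEdges x b c = arcEdges x a c := by
  rw [arcEdges, arcEdges, ← Set.image_union, Set.Ico_union_Ico_eq_Ico hab hbc, arcEdges]

lemma exists_modEq_mem_Ico (hd : 0 < d) (t k : ℕ) : ∃ i ∈ Set.Ico t (t + d), i ≡ k [MOD d] := by
  obtain ⟨e, rfl⟩ := Nat.exists_eq_succ_of_ne_zero hd.ne'
  refine ⟨t + (k + t * e) % (e + 1), ⟨Nat.le_add_right _ _, ?_⟩, ?_⟩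
  · exact Nat.add_lt_add_left (Nat.mod_lt _ hd) t
  · calc t + (k + t * e) % (e + 1) ≡ t + (k + t * e) [MOD e + 1] :=
        (Nat.mod_modEq _ _).add_left t
      _ = k + (e + 1) * t := by ring
      _ ≡ k [MOD e + 1] := by simp [Nat.ModEq]

lemma exists_periodicCycle {r : V} {p : G.Walk r r} (hp : p.IsCycle) :
    ∃ x : ℕ → V, PeriodicCycle G x p.length ∧
      p.edges = (List.range p.length).map (stepEdge x) := by
  have hlen := hp.three_le_length
  have hsucc : ∀ k, p.getVert ((k + 1) % p.length) = p.getVert (k % p.length + 1) := by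
    intro k
    rw [Nat.add_mod, Nat.mod_eq_of_lt (show 1 < p.length by omega)]
    have hle : k % p.length + 1 ≤ p.length := Nat.mod_lt k (by omega)
    obtain h | h := hle.lt_or_eq
    · rw [Nat.mod_eq_of_lt h]
    · rw [h, Nat.mod_self, Walk.getVert_zero, Walk.getVert_length]
  refine ⟨fun k => p.getVert (k % p.length), ⟨hlen, fun a => by simp, fun a => ?_, ?_⟩, ?_⟩
  · simp only [hsucc]
    exact p.adj_getVert_succ (Nat.mod_lt a (by omega))
  · intro a b h
    have hmem (c : ℕ) : c % p.length ∈ {i | i ≤ p.length - 1} :=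
      Nat.le_sub_one_of_lt (Nat.mod_lt c (by omega))
    exact hp.getVert_injOn' (hmem a) (hmem b) h
  · refine List.ext_getElem (by simp) fun i hi _ => ?_
    rw [Walk.length_edges] at hi
    simp only [Walk.getElem_edges, List.getElem_map, List.getElem_range, stepEdge, hsucc,
      Nat.mod_eq_of_lt hi]

namespace PeriodicCycle

lemma pos (hx : PeriodicCycle G x d) : 0 < d :=
  three_pos.trans_le hx.three_le

lemma apply_congr (hx : PeriodicCycle G x d) {a b : ℕ} (h : a ≡ b [MOD d]) : x a = x b := by
  rw [← hx.periodic.map_mod_nat, h, hx.periodic.map_mod_nat]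

lemma stepEdge_congr (hx : PeriodicCycle G x d) {a b : ℕ} (h : a ≡ b [MOD d]) :
    stepEdge x a = stepEdge x b := by
  rw [stepEdge, stepEdge, hx.apply_congr h, hx.apply_congr (h.add_right 1)]

lemma eq_of_apply_eq (hx : PeriodicCycle G x d) {a b : ℕ} (h : x a = x b) (hab : a < b + d)
    (hba : b < a + d) : a = b := by
  refine (hx.modEq h).eq_of_abs_lt ?_
  rw [abs_lt]
  omega

lemma range_stepEdge_subset (hx : PeriodicCycle G x d) {a b : ℕ} (h : a + d ≤ b) :
    Set.range (stepEdge x) ⊆ arcEdges x a b := by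
  rintro _ ⟨k, rfl⟩
  obtain ⟨i, hi, hik⟩ := exists_modEq_mem_Ico hx.pos a k
  exact ⟨i, ⟨hi.1, hi.2.trans_le h⟩, hx.stepEdge_congr hik⟩

lemma stepEdge_injOn (hx : PeriodicCycle G x d) (t : ℕ) :
    Set.InjOn (stepEdge x) (Set.Ico t (t + d)) := by
  rintro i ⟨hti, hit⟩ j ⟨htj, hjt⟩ h
  have hd := hx.three_le
  obtain ⟨h1, -⟩ | ⟨h1, h2⟩ := Sym2.eq_iff.1 h
  · exact hx.eq_of_apply_eq h1 (by omega) (by omega)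
  · have hij : i ≡ i + 2 [MOD d] := (hx.modEq h1).trans ((hx.modEq h2).symm.add_right 1)
    have hdvd := (Nat.modEq_iff_dvd' (Nat.le_add_right i 2)).1 hij
    rw [Nat.add_sub_cancel_left] at hdvd
    have := Nat.le_of_dvd two_pos hdvd
    omega

lemma ncard_range (hx : PeriodicCycle G x d) : (Set.range x).ncard = d := by
  have himage : Set.range x = x '' Set.Iio d := by
    refine subset_antisymm ?_ (Set.image_subset_range _ _)
    rintro _ ⟨k, rfl⟩
    exact ⟨k % d, Nat.mod_lt k hx.pos, hx.periodic.map_mod_nat k⟩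
  rw [himage, Set.InjOn.ncard_image ?_, ← Finset.coe_Iio, Set.ncard_coe_finset, Nat.card_Iio]
  rintro i hi j hj h
  simp only [Set.mem_Iio] at hi hj
  exact hx.eq_of_apply_eq h (by omega) (by omega)

-- Two of the three edges at a vertex of the cycle are cycle edges.
lemma adj_unique (hx : PeriodicCycle G x d) (hG : IsCubic G) {k : ℕ} {u v : V}
    (hu : (offCycle G x).Adj (x k) u) (hv : (offCycle G x).Adj (x k) v) : u = v := by
  by_contra huv
  have hd := hx.three_le
  rw [offCycle_adj] at hu hv
  obtain ⟨e, rfl⟩ : ∃ e, d = e + 1 := ⟨d - 1, by omega⟩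
  have hprev : x (k + e + 1) = x k := hx.periodic k
  have hne : x (k + 1) ≠ x (k + e) := fun h => by
    have := hx.eq_of_apply_eq h (by omega) (by omega)
    omega
  have hoff : ∀ w, (∀ j, s(x k, w) ≠ stepEdge x j) → w ≠ x (k + 1) ∧ w ≠ x (k + e) := by
    refine fun w hw => ⟨fun h => hw k (by rw [h, stepEdge]), fun h => hw (k + e) ?_⟩
    rw [stepEdge, hprev, h, Sym2.eq_swap]
  have hsub : ({u, v, x (k + 1), x (k + e)} : Set V) ⊆ G.neighborSet (x k) := by
    rintro z (rfl | rfl | rfl | rfl)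
    exacts [hu.1, hv.1, hx.adj k, hprev ▸ (hx.adj (k + e)).symm]
  have hcard := Set.ncard_le_ncard hsub (Set.finite_of_ncard_ne_zero (by rw [hG]; decide))
  rw [hG, Set.ncard_insert_of_notMem (by simp [hoff u hu.2, huv]),
    Set.ncard_insert_of_notMem (by simp [hoff v hv.2]), Set.ncard_pair hne] at hcard
  omega

lemma eq_end_of_mem_support (hx : PeriodicCycle G x d) (hG : IsCubic G) {u v : V}
    {w : (offCycle G x).Walk u v} (hw : w.IsPath) {k : ℕ} (hk : x k ∈ w.support) :
    x k = u ∨ x k = v := by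
  obtain ⟨i, hi, hilen⟩ := Walk.mem_support_iff_exists_getVert.1 hk
  by_contra! hne
  have hpos : i ≠ 0 := by
    rintro rfl
    exact hne.1 (by rw [← hi, Walk.getVert_zero])
  have hlt : i ≠ w.length := by
    rintro rfl
    exact hne.2 (by rw [← hi, Walk.getVert_length])
  obtain ⟨j, rfl⟩ := Nat.exists_eq_add_one_of_ne_zero hpos
  have hprev := w.adj_getVert_succ (i := j) (by omega)
  have hnext := w.adj_getVert_succ (i := j + 1) (by omega)
  rw [hi] at hprev hnext
  have := hw.getVert_injOn (show j ≤ w.length by omega) (show j + 1 + 1 ≤ w.length by omega)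
    (hx.adj_unique hG hprev.symm hnext)
  omega

lemma notMem_support_of_isCycle (hx : PeriodicCycle G x d) (hG : IsCubic G) {r : V}
    {q : (offCycle G x).Walk r r} (hq : q.IsCycle) (k : ℕ) : x k ∉ q.support := by
  intro hk
  obtain ⟨u, v, huv, hs⟩ := Set.ncard_eq_two.1 (hq.ncard_neighborSet_toSubgraph_eq_two hk)
  have hu : u ∈ q.toSubgraph.neighborSet (x k) := by rw [hs]; simp
  have hv : v ∈ q.toSubgraph.neighborSet (x k) := by rw [hs]; simp
  exact huv (hx.adj_unique hG hu.adj_sub hv.adj_sub)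

lemma exists_isPath_arc (hx : PeriodicCycle G x d) {a m : ℕ} (hm : m < d) :
    ∃ w : G.Walk (x a) (x (a + m)), w.IsPath ∧ w.support = (List.range' a (m + 1)).map x ∧
      w.edges = (List.range' a m).map (stepEdge x) := by
  obtain ⟨w, hsupp, hedges⟩ : ∃ w : G.Walk (x a) (x (a + m)),
      w.support = (List.range' a (m + 1)).map x ∧
        w.edges = (List.range' a m).map (stepEdge x) := by
    clear hm
    induction m with
    | zero => exact ⟨Walk.nil, by simp, by simp⟩
    | succ m ih =>
      obtain ⟨w, hsupp, hedges⟩ := ih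
      refine ⟨w.concat (hx.adj (a + m)), ?_, ?_⟩
      · rw [Walk.support_concat, hsupp, List.range'_1_concat (n := m + 1)]
        simp [← add_assoc]
      · rw [Walk.edges_concat, hedges, List.range'_1_concat]
        simp [stepEdge, ← add_assoc]
  refine ⟨w, ?_, hsupp, hedges⟩
  rw [Walk.isPath_def, hsupp]
  refine List.Nodup.map_on (fun i hi j hj hij => ?_) List.nodup_range'
  rw [List.mem_range'_1] at hi hj
  exact hx.eq_of_apply_eq hij (by omega) (by omega)

end PeriodicCycle

end PeriodicCycles

section Arcs

variable {G : SimpleGraph V} {σ : Sym2 V → Bool} {g : V → ZMod 2} {x : ℕ → V} {d : ℕ}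

/-- The partial sums of the signs along the sequence `x`, after switching by `g`. -/
def switchedSum (σ : Sym2 V → Bool) (g : V → ZMod 2) (x : ℕ → V) (k : ℕ) : ZMod 2 :=
  ∑ i ∈ Finset.range k, (edgeSign σ (stepEdge x i) + g (x i) + g (x (i + 1)))

variable (G) in
/-- The component of position `k` of the closed sequence `x` in the graph off that sequence. -/
def offComponent (x : ℕ → V) (k : ℕ) : (offCycle G x).ConnectedComponent :=
  (offCycle G x).connectedComponentMk (x k)

variable (G σ g x d) in
/-- An unbalanced cycle, presented as a periodic sequence `x`, such that the rest of the graph is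
balanced: switching by `g` makes every edge off the cycle positive. -/
structure SwitchedCycle : Prop extends PeriodicCycle G x d where
  edgeSign_eq : ∀ u v, (offCycle G x).Adj u v → edgeSign σ s(u, v) = g u + g v
  switchedSum_add_period : ∀ k, switchedSum σ g x (k + d) = switchedSum σ g x k + 1

variable (G σ g x d) in
/-- The arc of the closed sequence `x` from position `a` to position `b` can be closed up off the
sequence to a balanced circuit. -/
structure GoodArc (a b : ℕ) : Prop where
  lt : a < b
  lt_add : b < a + d
  comp_eq : offComponent G x a = offComponent G x b
  sum_eq : switchedSum σ g x a = switchedSum σ g x b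

lemma switchedSum_succ (k : ℕ) : switchedSum σ g x (k + 1) =
    switchedSum σ g x k + (edgeSign σ (stepEdge x k) + g (x k) + g (x (k + 1))) :=
  Finset.sum_range_succ _ _

lemma sum_edgeSign_range' (a m : ℕ) :
    (((List.range' a m).map (stepEdge x)).map (edgeSign σ)).sum =
      switchedSum σ g x a + switchedSum σ g x (a + m) + g (x a) + g (x (a + m)) := by
  induction m with
  | zero => simp [CharTwo.add_self_eq_zero]
  | succ m ih =>
    rw [List.range'_1_concat, List.map_append, List.map_append, List.sum_append, ih,
      ← Nat.add_assoc, switchedSum_succ]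
    simp only [List.map_cons, List.map_nil, List.sum_singleton]
    linear_combination -g (x (a + m + 1)) * CharTwo.two_eq_zero (R := ZMod 2)

lemma disjoint_tail_support {u v : V} {p : G.Walk u v} {q : G.Walk v u} (hp : p.IsPath)
    (hq : q.IsPath) (h : ∀ z ∈ p.support, z ∈ q.support → z = u ∨ z = v) :
    p.support.tail.Disjoint q.support.tail := by
  intro z hzp hzq
  have hp' := hp.support_nodup
  have hq' := hq.support_nodup
  rw [← Walk.cons_tail_support, List.nodup_cons] at hp' hq'
  obtain rfl | rfl := h z (List.mem_of_mem_tail hzp) (List.mem_of_mem_tail hzq)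
  · exact hp'.1 hzp
  · exact hq'.1 hzq

lemma PeriodicCycle.switchedSum_add (hx : PeriodicCycle G x d)
    (hsign : (((List.range d).map (stepEdge x)).map (edgeSign σ)).sum = 1) (k : ℕ) :
    switchedSum σ g x (k + d) = switchedSum σ g x k + 1 := by
  induction k with
  | zero =>
    rw [List.range_eq_range', sum_edgeSign_range' (g := g), hx.periodic,
      add_assoc, CharTwo.add_self_eq_zero, add_zero] at hsign
    rw [← hsign, CharTwo.add_cancel_left]
  | succ k ih =>
    rw [Nat.add_right_comm, switchedSum_succ, switchedSum_succ, ih, hx.periodic,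
      Nat.add_right_comm, hx.periodic, hx.stepEdge_congr (Nat.add_modEq_right (a := k))]
    ring

lemma PeriodicCycle.exists_isCycle_arc (hx : PeriodicCycle G x d) (hG : IsCubic G) {a m : ℕ}
    (hpos : 0 < m) (hm : m < d) {q : (offCycle G x).Walk (x a) (x (a + m))} (hq : q.IsPath) :
    ∃ p : G.Walk (x a) (x a), p.IsCycle ∧
      p.edges = (List.range' a m).map (stepEdge x) ++ q.edges.reverse := by
  obtain ⟨w, hw, hsupp, hedges⟩ := hx.exists_isPath_arc (a := a) hm
  have hq' : (q.mapLe (offCycle_le x)).reverse.IsPath := (hq.mapLe _).reverse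
  refine ⟨w.append (q.mapLe (offCycle_le x)).reverse, hw.isCycle_append hq' ?_ ?_, ?_⟩
  · refine disjoint_tail_support hw hq' fun z hz hzq => ?_
    rw [hsupp, List.mem_map] at hz
    obtain ⟨k, -, rfl⟩ := hz
    exact hx.eq_end_of_mem_support hG hq (by simpa using hzq)
  · by_contra! hlen
    have hwlen : w.length = m := by rw [← Walk.length_edges, hedges]; simp
    obtain rfl : m = 1 := by omega
    have hne : x a ≠ x (a + 1) := (hx.adj a).ne
    have hqlen : q.length = 1 := by
      have hle : q.length ≤ 1 := by simpa using hlen.2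
      have hzero : q.length ≠ 0 := fun h => hne (Walk.eq_of_length_eq_zero h)
      omega
    exact (offCycle_adj.1 (Walk.adj_of_length_eq_one hqlen)).2 a rfl
  · rw [Walk.edges_append, hedges, Walk.edges_reverse, Walk.edges_mapLe_eq_edges]

namespace GoodArc

variable {a b : ℕ}

lemma add_mul (h : GoodArc G σ g x d a b) (hx : SwitchedCycle G σ g x d) (m : ℕ) :
    GoodArc G σ g x d (a + m * d) (b + m * d) := by
  induction m with
  | zero => simpa using h
  | succ m ih =>
    obtain ⟨hlt, hlt_add, hcomp, hsum⟩ := ih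
    rw [Nat.succ_mul, ← Nat.add_assoc, ← Nat.add_assoc]
    refine ⟨by omega, by omega, ?_, ?_⟩
    · rwa [offComponent, offComponent, hx.periodic, hx.periodic]
    · rw [hx.switchedSum_add_period, hx.switchedSum_add_period, hsum]

lemma hasSignCover_arcEdges (h : GoodArc G σ g x d a b) (hx : SwitchedCycle G σ g x d)
    (hG : IsCubic G) (w : (offCycle G x).Walk (x a) (x b)) :
    HasSignCover G σ (arcEdges x a b) (b - a + w.length) := by
  classical
  obtain ⟨m, rfl⟩ := Nat.exists_eq_add_of_le h.lt.le
  have hm : 0 < m ∧ m < d := by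
    have := h.lt
    have := h.lt_add
    omega
  obtain ⟨p, hp, hedges⟩ := hx.exists_isCycle_arc hG hm.1 hm.2 w.bypass_isPath
  refine (HasSignCover.of_balanced_isCycle hp ?_).mono ?_ ?_
  · have hw : walkSign σ w.bypass = g (x a) + g (x (a + m)) :=
      walkSign_eq_add hx.edgeSign_eq w.bypass
    rw [walkSign] at hw ⊢
    rw [hedges, List.map_append, List.sum_append, sum_edgeSign_range' (g := g), List.map_reverse,
      List.sum_reverse, hw, h.sum_eq, CharTwo.add_self_eq_zero, zero_add, CharTwo.add_self_eq_zero]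
  · rintro _ ⟨k, hk, rfl⟩
    rw [Walk.mem_edgeSet, hedges, List.mem_append, List.mem_map]
    exact Or.inl ⟨k, List.mem_range'_1.2 hk, rfl⟩
  · have hlen := congrArg List.length hedges
    have hle := w.length_bypass_le_length
    simp only [Walk.length_edges, List.length_append, List.length_map, List.length_range',
      List.length_reverse] at hlen
    omega

end GoodArc

end Arcs

section GoodArcs

variable {G : SimpleGraph V} {σ : Sym2 V → Bool} {g : V → ZMod 2} {x : ℕ → V} {d : ℕ}

variable (G σ) in
/-- No switching of the signature leaves exactly one negative edge. -/
def NoSingleNegative : Prop :=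
  ∀ e ∈ G.edgeSet, ∀ g : V → ZMod 2,
    ¬ ∀ u v, G.Adj u v → (edgeSign σ s(u, v) = g u + g v ↔ s(u, v) ≠ e)

namespace SwitchedCycle

variable {t : ℕ}

lemma switchedSum_eq_of_forall_not_goodArc (hx : SwitchedCycle G σ g x d)
    (hno : ∀ a b, GoodArc G σ g x d a b → a < t + d → b < t + d) {i j : ℕ}
    (hi : i ∈ Set.Ico t (t + d)) (hj : j ∈ Set.Ico t (t + d))
    (hcomp : offComponent G x i = offComponent G x j) :
    switchedSum σ g x i = switchedSum σ g x j := by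
  wlog hij : i ≤ j generalizing i j
  · exact (this hj hi hcomp.symm (le_of_not_ge hij)).symm
  obtain rfl | hij := hij.eq_or_lt
  · rfl
  by_contra hne
  have harc : GoodArc G σ g x d j (i + d) := by
    refine ⟨hj.2.trans_le (Nat.add_le_add_right hi.1 d), Nat.add_lt_add_right hij d, ?_, ?_⟩
    · rw [← hcomp, offComponent, offComponent, hx.periodic]
    · have hsum : switchedSum σ g x i + switchedSum σ g x j = 1 := by
        by_contra h
        exact hne (CharTwo.add_eq_zero.1 (zmod_two_ne_one_iff.1 h))
      rw [hx.switchedSum_add_period, ← hsum, CharTwo.add_cancel_left]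
  exact (hno _ _ harc hj.2).not_ge (Nat.add_le_add_right hi.1 d)

lemma edgeSign_stepEdge_eq_iff (hx : SwitchedCycle G σ g x d)
    {φ : (offCycle G x).ConnectedComponent → ZMod 2}
    (hφ : ∀ i ∈ Set.Ico t (t + d), φ (offComponent G x i) = switchedSum σ g x i) {i : ℕ}
    (hi : i ∈ Set.Ico t (t + d)) :
    edgeSign σ (stepEdge x i) = g (x i) + φ (offComponent G x i) +
      (g (x (i + 1)) + φ (offComponent G x (i + 1))) ↔ i + 1 ≠ t + d := by
  have hpos := hx.pos
  have hsucc := switchedSum_succ (σ := σ) (g := g) (x := x) i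
  rw [hφ i hi]
  have hle : i + 1 ≤ t + d := hi.2
  obtain hlt | heq := hle.lt_or_eq
  · rw [hφ (i + 1) ⟨by have := hi.1; omega, hlt⟩, hsucc]
    refine iff_of_true ?_ hlt.ne
    generalize edgeSign σ (stepEdge x i) = e, switchedSum σ g x i = s, g (x i) = y,
      g (x (i + 1)) = z
    revert e s y z
    decide
  · have hwrap : switchedSum σ g x (i + 1) = φ (offComponent G x (i + 1)) + 1 := by
      rw [heq, hx.switchedSum_add_period, offComponent, hx.periodic, ← hφ t (by simpa using hpos),
        offComponent]
    refine iff_of_false ?_ (not_not.2 heq)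
    rw [hwrap] at hsucc
    revert hsucc
    generalize edgeSign σ (stepEdge x i) = e, switchedSum σ g x i = s, g (x i) = y,
      g (x (i + 1)) = z, φ (offComponent G x (i + 1)) = w
    revert e s y z w
    decide

-- If `φ` is constant on components and agrees with the partial sums on a whole period, then adding
-- it to `g` makes every edge positive except the one that closes the period.
lemma not_noSingleNegative (hx : SwitchedCycle G σ g x d)
    {φ : (offCycle G x).ConnectedComponent → ZMod 2}
    (hφ : ∀ i ∈ Set.Ico t (t + d), φ (offComponent G x i) = switchedSum σ g x i) :
    ¬ NoSingleNegative G σ := by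
  intro hns
  obtain ⟨n, hn⟩ := Nat.exists_eq_add_one_of_ne_zero (n := t + d) (by have := hx.pos; omega)
  have hnmem : n ∈ Set.Ico t (t + d) := ⟨by have := hx.pos; omega, by omega⟩
  refine hns (stepEdge x n) (hx.adj n)
    (fun v => g v + φ ((offCycle G x).connectedComponentMk v)) fun u v huv => ?_
  by_cases hoff : (offCycle G x).Adj u v
  · refine iff_of_true ?_ ((offCycle_adj.1 hoff).2 n)
    rw [hx.edgeSign_eq u v hoff, ConnectedComponent.sound hoff.reachable, add_add_add_comm,
      CharTwo.add_self_eq_zero, add_zero]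
  · obtain ⟨k, hk⟩ : ∃ k, s(u, v) = stepEdge x k := by
      by_contra! hne
      exact hoff (offCycle_adj.2 ⟨huv, hne⟩)
    obtain ⟨i, hi, hik⟩ := exists_modEq_mem_Ico hx.pos t k
    rw [← hx.stepEdge_congr hik] at hk
    have hsign := hx.edgeSign_stepEdge_eq_iff hφ hi
    have hin : stepEdge x i ≠ stepEdge x n ↔ i + 1 ≠ t + d := by
      rw [(hx.stepEdge_injOn t).ne_iff hi hnmem, hn, Ne, Ne, Nat.add_right_cancel_iff]
    rw [hk, hin, ← hsign]
    obtain ⟨rfl, rfl⟩ | ⟨rfl, rfl⟩ := Sym2.eq_iff.1 hk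
    · rfl
    · rw [add_comm]
      rfl

lemma exists_goodArc (hx : SwitchedCycle G σ g x d) (hns : NoSingleNegative G σ) (t : ℕ) :
    ∃ a b, GoodArc G σ g x d a b ∧ a < t + d ∧ t + d ≤ b := by
  by_contra! hno
  have hfactors : Function.FactorsThrough (fun i : Set.Ico t (t + d) => switchedSum σ g x i)
      (fun i => offComponent G x i) := fun i j hij =>
    hx.switchedSum_eq_of_forall_not_goodArc hno i.2 j.2 hij
  exact hx.not_noSingleNegative (fun i hi => hfactors.extend_apply 0 ⟨i, hi⟩) hns

end SwitchedCycle

end GoodArcs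

section Subcovers

variable {α ι : Type*} {R : ι → Finset α}

lemma exists_minimal_subcover {J : Finset ι} (hcov : ∀ t, ∃ i ∈ J, t ∈ R i) :
    ∃ K ⊆ J, (∀ t, ∃ i ∈ K, t ∈ R i) ∧ ∀ i ∈ K, ∃ t ∈ R i, ∀ j ∈ K, t ∈ R j → j = i := by
  classical
  obtain ⟨K, hK⟩ := (J.powerset.filter fun K => ∀ t, ∃ i ∈ K, t ∈ R i).exists_minimal
    ⟨J, by simpa using hcov⟩
  obtain ⟨hKJ, hKcov⟩ := Finset.mem_filter.1 hK.prop
  rw [Finset.mem_powerset] at hKJ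
  refine ⟨K, hKJ, hKcov, fun i hi => ?_⟩
  by_contra! hshared
  refine Finset.notMem_erase i K (hK.le_of_le (Finset.mem_filter.2 ⟨?_, fun t => ?_⟩)
    (Finset.erase_subset i K) hi)
  · exact Finset.mem_powerset.2 ((Finset.erase_subset i K).trans hKJ)
  · obtain ⟨j, hj, hjt⟩ := hKcov t
    obtain rfl | hji := eq_or_ne j i
    · obtain ⟨k, hk, hkt, hkj⟩ := hshared t hjt
      exact ⟨k, Finset.mem_erase.2 ⟨hkj, hk⟩, hkt⟩
    · exact ⟨j, Finset.mem_erase.2 ⟨hji, hj⟩, hjt⟩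

lemma card_filter_mem_le_two [DecidableEq α] {K : Finset ι}
    (hprivate : ∀ i ∈ K, ∃ t ∈ R i, ∀ j ∈ K, t ∈ R j → j = i)
    (htriple : ∀ i j k t, t ∈ R i → t ∈ R j → t ∈ R k →
      R i ⊆ R j ∪ R k ∨ R j ⊆ R i ∪ R k ∨ R k ⊆ R i ∪ R j) (t : α) :
    {i ∈ K | t ∈ R i}.card ≤ 2 := by
  have hnot : ∀ i ∈ K, ∀ j ∈ K, ∀ k ∈ K, i ≠ j → i ≠ k → ¬ R i ⊆ R j ∪ R k := by
    intro i hi j hj k hk hij hik hsub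
    obtain ⟨t, ht, hown⟩ := hprivate i hi
    obtain h | h := Finset.mem_union.1 (hsub ht)
    exacts [hij (hown j hj h).symm, hik (hown k hk h).symm]
  by_contra! hcard
  obtain ⟨i, hi, j, hj, k, hk, hij, hik, hjk⟩ := Finset.two_lt_card.1 hcard
  rw [Finset.mem_filter] at hi hj hk
  obtain h | h | h := htriple i j k t hi.2 hj.2 hk.2
  · exact hnot i hi.1 j hj.1 k hk.1 hij hik h
  · exact hnot j hj.1 i hi.1 k hk.1 hij.symm hjk h
  · exact hnot k hk.1 i hi.1 j hj.1 hik.symm hjk.symm h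

lemma card_le_card_filter_card_le_one [Fintype α] [DecidableEq α] {K : Finset ι}
    (hprivate : ∀ i ∈ K, ∃ t ∈ R i, ∀ j ∈ K, t ∈ R j → j = i) :
    K.card ≤ (Finset.univ.filter fun t => {i ∈ K | t ∈ R i}.card ≤ 1).card := by
  refine Finset.card_le_card_of_forall_subsingleton (fun i t => t ∈ R i) (fun i hi => ?_) ?_
  · obtain ⟨t, ht, hown⟩ := hprivate i hi
    refine ⟨t, ?_, ht⟩
    rw [Finset.mem_filter_univ, Finset.card_le_one]
    intro j hj k hk
    rw [Finset.mem_filter] at hj hk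
    rw [hown j hj.1 hj.2, hown k hk.1 hk.2]
  · intro t ht i hi j hj
    rw [Finset.mem_filter_univ, Finset.card_le_one] at ht
    exact ht i (Finset.mem_filter.2 hi) j (Finset.mem_filter.2 hj)

-- Every point lies in at most two members, and each member has a point of its own.
lemma sum_card_add_card_le [Fintype α] [DecidableEq α] {K : Finset ι}
    (hprivate : ∀ i ∈ K, ∃ t ∈ R i, ∀ j ∈ K, t ∈ R j → j = i)
    (htriple : ∀ i j k t, t ∈ R i → t ∈ R j → t ∈ R k →
      R i ⊆ R j ∪ R k ∨ R j ⊆ R i ∪ R k ∨ R k ⊆ R i ∪ R j) :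
    ∑ i ∈ K, (R i).card + K.card ≤ 2 * Fintype.card α := by
  have hdouble : ∑ i ∈ K, (R i).card = ∑ t, {i ∈ K | t ∈ R i}.card := by
    simpa [Finset.bipartiteAbove, Finset.bipartiteBelow] using
      Finset.sum_card_bipartiteAbove_eq_sum_card_bipartiteBelow (s := K)
        (t := Finset.univ) (fun i t => t ∈ R i)
  calc ∑ i ∈ K, (R i).card + K.card
      ≤ ∑ t, {i ∈ K | t ∈ R i}.card + ∑ t, (if {i ∈ K | t ∈ R i}.card ≤ 1 then 1 else 0) := by
        rw [hdouble, ← Finset.card_filter]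
        exact Nat.add_le_add_left (card_le_card_filter_card_le_one hprivate) _
    _ ≤ ∑ _t : α, 2 := by
        rw [← Finset.sum_add_distrib]
        refine Finset.sum_le_sum fun t _ => ?_
        have := card_filter_mem_le_two hprivate htriple t
        split_ifs <;> omega
    _ = 2 * Fintype.card α := by simp [mul_comm]

end Subcovers

section CyclicIntervals

/-- The residues modulo `d` of the integers in `[a, b)`: an arc of a cycle of length `d`, with each
edge represented by the residue of its position. -/
def cyclicInterval (d a b : ℕ) : Finset (ZMod d) :=
  (Finset.Ico a b).image (↑)

variable {d a b : ℕ}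

lemma mem_cyclicInterval {t : ZMod d} :
    t ∈ cyclicInterval d a b ↔ ∃ k ∈ Set.Ico a b, (k : ZMod d) = t := by
  simp [cyclicInterval]

lemma cyclicInterval_add (d a b : ℕ) {n : ℕ} (hn : (n : ZMod d) = 0) :
    cyclicInterval d (a + n) (b + n) = cyclicInterval d a b := by
  rw [cyclicInterval, ← Finset.image_add_right_Ico, Finset.image_image, cyclicInterval]
  congr 1
  ext k
  simp [hn]

lemma cyclicInterval_mono {a' b' : ℕ} (ha : a' ≤ a) (hb : b ≤ b') :
    cyclicInterval d a b ⊆ cyclicInterval d a' b' :=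
  Finset.image_subset_image (Finset.Ico_subset_Ico ha hb)

lemma card_cyclicInterval (h : b ≤ a + d) : (cyclicInterval d a b).card = b - a := by
  rw [cyclicInterval, Finset.card_image_of_injOn, Nat.card_Ico]
  intro i hi j hj hij
  rw [Finset.coe_Ico, Set.mem_Ico] at hi hj
  refine ((ZMod.natCast_eq_natCast_iff i j d).1 hij).eq_of_abs_lt ?_
  rw [abs_lt]
  omega

lemma cyclicInterval_union {a' b' : ℕ} (h : a' ≤ b) (h' : a ≤ b') :
    cyclicInterval d a b ∪ cyclicInterval d a' b' = cyclicInterval d (min a a') (max b b') := by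
  rw [cyclicInterval, cyclicInterval, ← Finset.image_union, Finset.Ico_union_Ico' h h',
    cyclicInterval]

lemma exists_cyclicInterval_eq_of_mem {t : ZMod d} (h : t ∈ cyclicInterval d a b) {T : ℕ}
    (hT : (T : ZMod d) = t) (hbT : b ≤ T) :
    ∃ a' b', cyclicInterval d a' b' = cyclicInterval d a b ∧ a' ≤ T ∧ T < b' := by
  obtain ⟨k, hk, hkt⟩ := mem_cyclicInterval.1 h
  have hkT : k ≤ T := (hk.2.trans_le hbT).le
  refine ⟨a + (T - k), b + (T - k), cyclicInterval_add d a b ?_, ?_, ?_⟩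
  · rw [Nat.cast_sub hkT, hT, hkt, sub_self]
  · have := hk.1
    omega
  · have := hk.2
    omega

lemma cyclicInterval_subset_union_of_mem [NeZero d] {a₁ b₁ a₂ b₂ a₃ b₃ : ℕ} {t : ZMod d}
    (h₁ : t ∈ cyclicInterval d a₁ b₁) (h₂ : t ∈ cyclicInterval d a₂ b₂)
    (h₃ : t ∈ cyclicInterval d a₃ b₃) :
    cyclicInterval d a₁ b₁ ⊆ cyclicInterval d a₂ b₂ ∪ cyclicInterval d a₃ b₃ ∨
      cyclicInterval d a₂ b₂ ⊆ cyclicInterval d a₁ b₁ ∪ cyclicInterval d a₃ b₃ ∨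
      cyclicInterval d a₃ b₃ ⊆ cyclicInterval d a₁ b₁ ∪ cyclicInterval d a₂ b₂ := by
  obtain ⟨T, hT, hle⟩ : ∃ T : ℕ, (T : ZMod d) = t ∧ b₁ + b₂ + b₃ ≤ T := by
    refine ⟨t.val + d * (b₁ + b₂ + b₃), by simp, ?_⟩
    exact (Nat.le_mul_of_pos_left _ (NeZero.pos d)).trans (Nat.le_add_left _ _)
  obtain ⟨p₁, q₁, e₁, l₁, u₁⟩ := exists_cyclicInterval_eq_of_mem h₁ hT (by omega)
  obtain ⟨p₂, q₂, e₂, l₂, u₂⟩ := exists_cyclicInterval_eq_of_mem h₂ hT (by omega)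
  obtain ⟨p₃, q₃, e₃, l₃, u₃⟩ := exists_cyclicInterval_eq_of_mem h₃ hT (by omega)
  rw [← e₁, ← e₂, ← e₃, cyclicInterval_union (l₃.trans u₂.le) (l₂.trans u₃.le),
    cyclicInterval_union (l₃.trans u₁.le) (l₁.trans u₃.le),
    cyclicInterval_union (l₂.trans u₁.le) (l₁.trans u₂.le)]
  obtain h | h | h : (min p₂ p₃ ≤ p₁ ∧ q₁ ≤ max q₂ q₃) ∨ (min p₁ p₃ ≤ p₂ ∧ q₂ ≤ max q₁ q₃) ∨
      (min p₁ p₂ ≤ p₃ ∧ q₃ ≤ max q₁ q₂) := by omega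
  exacts [Or.inl (cyclicInterval_mono h.1 h.2), Or.inr (Or.inl (cyclicInterval_mono h.1 h.2)),
    Or.inr (Or.inr (cyclicInterval_mono h.1 h.2))]

lemma exists_subcover_cyclicInterval [NeZero d] {ι : Type*} {J : Finset ι} {a b : ι → ℕ}
    (hd : ∀ i ∈ J, b i ≤ a i + d) (hcov : ∀ t, ∃ i ∈ J, t ∈ cyclicInterval d (a i) (b i)) :
    ∃ K ⊆ J, (∀ t, ∃ i ∈ K, t ∈ cyclicInterval d (a i) (b i)) ∧
      ∑ i ∈ K, (b i - a i) + K.card ≤ 2 * d := by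
  obtain ⟨K, hKJ, hKcov, hprivate⟩ := exists_minimal_subcover hcov
  have hsum := sum_card_add_card_le hprivate fun _ _ _ _ => cyclicInterval_subset_union_of_mem
  rw [ZMod.card, Finset.sum_congr rfl fun i hi => card_cyclicInterval (hd i (hKJ hi))] at hsum
  exact ⟨K, hKJ, hKcov, hsum⟩

end CyclicIntervals

section Triples

variable {G : SimpleGraph V} {σ : Sym2 V → Bool} {g : V → ZMod 2} {x : ℕ → V} {d : ℕ}

open Classical in
/-- The vertices that do not lie on the sequence `x`. -/
noncomputable def offVertices [Fintype V] (x : ℕ → V) : Finset V :=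
  {v | v ∉ Set.range x}

lemma mem_offVertices [Fintype V] {v : V} : v ∈ offVertices x ↔ v ∉ Set.range x := by
  simp [offVertices]

namespace PeriodicCycle

lemma card_offVertices_add [Fintype V] (hx : PeriodicCycle G x d) :
    (offVertices x).card + d = Fintype.card V := by
  have hcoe : (offVertices x : Set V) = (Set.range x)ᶜ := by
    ext v
    exact mem_offVertices
  rw [← Set.ncard_coe_finset, hcoe, ← hx.ncard_range, add_comm, Set.ncard_add_ncard_compl,
    Nat.card_eq_fintype_card]

lemma exists_tripod [Fintype V] (hx : PeriodicCycle G x d) (hG : IsCubic G) {α β γ : ℕ}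
    (hαβ : offComponent G x α = offComponent G x β)
    (hβγ : offComponent G x β = offComponent G x γ) :
    ∃ u, ∃ p : (offCycle G x).Walk (x α) u, ∃ q : (offCycle G x).Walk (x β) u,
      ∃ r : (offCycle G x).Walk (x γ) u,
        p.length + q.length + r.length + d ≤ Fintype.card V + 2 := by
  classical
  obtain ⟨w, hw⟩ := (ConnectedComponent.exact hαβ).exists_isPath
  obtain ⟨u, hu, r, hr, -, -, hrw⟩ := exists_isPath_to_set {v | v ∈ w.support}
    (ConnectedComponent.exact hβγ.symm).some w.end_mem_support
  refine ⟨u, w.takeUntil u hu, (w.dropUntil u hu).reverse, r, ?_⟩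
  have hlen := congrArg Walk.length (w.take_spec hu)
  rw [Walk.length_append] at hlen
  have hinter : (w.support.toFinset ∩ r.support.toFinset).card ≤ 1 := by
    refine Finset.card_le_one.2 fun y hy z hz => ?_
    simp only [Finset.mem_inter, List.mem_toFinset] at hy hz
    rw [hrw y hy.2 hy.1, hrw z hz.2 hz.1]
  have hsub : w.support.toFinset ∪ r.support.toFinset ⊆ {x α, x β, x γ} ∪ offVertices x := by
    intro v hv
    simp only [Finset.mem_union, List.mem_toFinset, Finset.mem_insert, Finset.mem_singleton,
      mem_offVertices] at hv ⊢
    refine or_iff_not_imp_right.2 fun hvx => ?_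
    obtain ⟨k, rfl⟩ := not_not.1 hvx
    have hkw : x k ∈ w.support → x k = x α ∨ x k = x β := hx.eq_end_of_mem_support hG hw
    obtain hv | hv := hv
    · tauto
    · obtain h | h := hx.eq_end_of_mem_support hG hr hv
      · exact Or.inr (Or.inr h)
      · have := hkw (h ▸ hu)
        tauto
  have hcard := (Finset.card_le_card hsub).trans (Finset.card_union_le _ _)
  have hthree := Finset.card_le_three (a := x α) (b := x β) (c := x γ)
  have hunion := Finset.card_union_add_card_inter w.support.toFinset r.support.toFinset
  rw [card_support_of_isPath hw, card_support_of_isPath hr] at hunion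
  have hoff := hx.card_offVertices_add
  rw [Walk.length_reverse]
  omega

end PeriodicCycle

lemma GoodArc.hasSignCover_of_consecutive {a b c : ℕ} {u : V} (hab : GoodArc G σ g x d a b)
    (hbc : GoodArc G σ g x d b c) (hx : SwitchedCycle G σ g x d) (hG : IsCubic G)
    (p : (offCycle G x).Walk (x a) u) (q : (offCycle G x).Walk (x b) u)
    (r : (offCycle G x).Walk (x c) u) (hac : a + d ≤ c) :
    HasSignCover G σ (Set.range (stepEdge x))
      (c - a + (p.length + 2 * q.length + r.length)) := by
  have hab_lt := hab.lt
  have hbc_lt := hbc.lt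
  refine ((hab.hasSignCover_arcEdges hx hG (p.append q.reverse)).union
    (hbc.hasSignCover_arcEdges hx hG (q.append r.reverse))).mono ?_ ?_
  · rw [arcEdges_union hab_lt.le hbc_lt.le]
    exact hx.range_stepEdge_subset hac
  · simp only [Walk.length_append, Walk.length_reverse]
    omega

namespace SwitchedCycle

lemma switchedSum_add_two_mul (hx : SwitchedCycle G σ g x d) (k : ℕ) :
    switchedSum σ g x (k + 2 * d) = switchedSum σ g x k := by
  rw [two_mul, ← Nat.add_assoc, hx.switchedSum_add_period, hx.switchedSum_add_period, add_assoc,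
    CharTwo.add_self_eq_zero, add_zero]

-- The three good arcs `(α, β)`, `(β, γ)` and `(γ, α + 2 * d)` wind twice around the cycle, and any
-- two of them cover it; the best of the three choices costs at most their average.
lemma exists_hasSignCover_of_triple [Fintype V] (hx : SwitchedCycle G σ g x d) (hG : IsCubic G)
    {α β γ : ℕ} (hαβ : GoodArc G σ g x d α β) (hβγ : GoodArc G σ g x d β γ) (hαγ : α + d < γ) :
    ∃ m, HasSignCover G σ (Set.range (stepEdge x)) m ∧ 3 * m ≤ 4 * Fintype.card V + 8 := by
  have hαβ_lt := hαβ.lt_add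
  have hβγ_lt := hβγ.lt_add
  obtain ⟨u, p, q, r, hlen⟩ := hx.exists_tripod hG hαβ.comp_eq hβγ.comp_eq
  have hper : x α = x (α + 2 * d) := (hx.periodic.nat_mul 2 α).symm
  have hper' : x β = x (β + 2 * d) := (hx.periodic.nat_mul 2 β).symm
  have hγα : GoodArc G σ g x d γ (α + 2 * d) := by
    refine ⟨by omega, by omega, ?_, ?_⟩
    · rw [offComponent, offComponent, ← hper]
      exact (hαβ.comp_eq.trans hβγ.comp_eq).symm
    · rw [hx.switchedSum_add_two_mul, ← hβγ.sum_eq, ← hαβ.sum_eq]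
  have hcover_αγ := hαβ.hasSignCover_of_consecutive hβγ hx hG p q r hαγ.le
  have hcover_βα := hβγ.hasSignCover_of_consecutive hγα hx hG q r (p.copy hper rfl) (by omega)
  have hcover_γβ := hγα.hasSignCover_of_consecutive (hαβ.add_mul hx 2) hx hG r (p.copy hper rfl)
    (q.copy hper' rfl) (by omega)
  rw [Walk.length_copy] at hcover_βα
  rw [Walk.length_copy, Walk.length_copy] at hcover_γβ
  by_contra! hbig
  have := hbig _ hcover_αγ
  have := hbig _ hcover_βα
  have := hbig _ hcover_γβ
  omega

end SwitchedCycle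

end Triples

section CommonArcs

variable {G : SimpleGraph V} {σ : Sym2 V → Bool} {g : V → ZMod 2} {x : ℕ → V} {d : ℕ}

lemma exists_common_arc {Z : ℕ → Prop} (hperiod : ∀ p, Z p → Z (p + 2 * d))
    (hanti : ∀ p, Z p → ¬ Z (p + d))
    (hno : ∀ α β γ, Z α → Z β → Z γ → α < β → β < γ → β < α + d → γ < β + d → γ ≤ α + d)
    {a b a' b' : ℕ} (ha : Z a) (hb : Z b) (ha' : Z a') (hb' : Z b') (hab : a < b)
    (hba : b < a + d) (hab' : a' < b') (hba' : b' < a' + d) (hle : a ≤ a') (hlt : a' < a + 2 * d) :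
    ∃ p q, Z p ∧ Z q ∧ p < q ∧ q < p + d ∧
      (p ≤ a ∧ b ≤ q ∨ p ≤ a + 2 * d ∧ b + 2 * d ≤ q) ∧ p ≤ a' ∧ b' ≤ q := by
  have hne : ∀ p q, Z p → Z q → q ≠ p + d := fun p q hp hq h => hanti p hp (h ▸ hq)
  have := hne a b' ha hb'
  have := hne a a' ha ha'
  have := hne b a' hb ha'
  have := hno a b b' ha hb hb'
  have := hno a b a' ha hb ha'
  have := hno a a' b' ha ha' hb'
  obtain haa' | haa' := le_or_gt a' b
  · obtain hbb' | hbb' := le_or_gt b' b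
    · exact ⟨a, b, ha, hb, by omega⟩
    · exact ⟨a, b', ha, hb', by omega⟩
  · obtain hnear | hfar := lt_or_ge a' (a + d)
    · exact ⟨a, b', ha, hb', by omega⟩
    · obtain hbb' | hbb' := le_or_gt b' (b + 2 * d)
      · exact ⟨a', b + 2 * d, ha', hperiod b hb, by omega⟩
      · exact ⟨a', b', ha', hb', by omega⟩

lemma PeriodicCycle.stepEdge_mem_arcEdges (hx : PeriodicCycle G x d) {k a b : ℕ}
    (h : (k : ZMod d) ∈ cyclicInterval d a b) : stepEdge x k ∈ arcEdges x a b := by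
  obtain ⟨j, hj, hjk⟩ := mem_cyclicInterval.1 h
  exact ⟨j, hj, hx.stepEdge_congr ((ZMod.natCast_eq_natCast_iff j k d).1 hjk)⟩

lemma PeriodicCycle.offComponent_add_mul (hx : PeriodicCycle G x d) (k m : ℕ) :
    offComponent G x (k + m * d) = offComponent G x k := by
  rw [offComponent, offComponent]
  exact congrArg _ (hx.periodic.nat_mul m k)

lemma cyclicInterval_add_mul (d a b m : ℕ) :
    cyclicInterval d (a + m * d) (b + m * d) = cyclicInterval d a b :=
  cyclicInterval_add d a b (by simp)

namespace SwitchedCycle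

variable {a b a' b' : ℕ}

lemma switchedSum_add_mul (hx : SwitchedCycle G σ g x d) (k m : ℕ) :
    switchedSum σ g x (k + m * d) = switchedSum σ g x k + m := by
  induction m with
  | zero => simp
  | succ m ih =>
    rw [Nat.succ_mul, ← Nat.add_assoc, hx.switchedSum_add_period, ih, Nat.cast_succ, add_assoc]

lemma exists_aligned (hx : SwitchedCycle G σ g x d) (a a' : ℕ) :
    ∃ m n, switchedSum σ g x (a + m * d) = switchedSum σ g x (a' + n * d) ∧
      a + m * d ≤ a' + n * d ∧ a' + n * d < a + m * d + 2 * d := by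
  have hpos := hx.pos
  obtain ⟨e, he⟩ : ∃ e : ℕ, switchedSum σ g x a = switchedSum σ g x a' + e :=
    ⟨(switchedSum σ g x a' + switchedSum σ g x a).val, by
      rw [ZMod.natCast_zmod_val, CharTwo.add_cancel_left]⟩
  have hle : a ≤ a' + (e + 2 * a) * d := by nlinarith
  set k := (a' + (e + 2 * a) * d - a) / (2 * d) with hk
  have hdiv := Nat.mod_add_div (a' + (e + 2 * a) * d - a) (2 * d)
  have hmod := Nat.mod_lt (a' + (e + 2 * a) * d - a) (show 0 < 2 * d by omega)
  have hmul : 2 * k * d = 2 * d * k := by ring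
  rw [← hk] at hdiv
  refine ⟨2 * k, e + 2 * a, ?_, by omega, by omega⟩
  rw [hx.switchedSum_add_mul, hx.switchedSum_add_mul, he]
  simp [CharTwo.two_eq_zero]

lemma exists_common_goodArc_of_aligned (hx : SwitchedCycle G σ g x d)
    (hno : ∀ α β γ, GoodArc G σ g x d α β → GoodArc G σ g x d β γ → γ ≤ α + d)
    (h : GoodArc G σ g x d a b) (h' : GoodArc G σ g x d a' b')
    (hcomp : offComponent G x a = offComponent G x a')
    (hsum : switchedSum σ g x a = switchedSum σ g x a') (hle : a ≤ a') (hlt : a' < a + 2 * d) :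
    ∃ p q, GoodArc G σ g x d p q ∧ offComponent G x p = offComponent G x a ∧
      cyclicInterval d a b ⊆ cyclicInterval d p q ∧
      cyclicInterval d a' b' ⊆ cyclicInterval d p q := by
  let Z (k : ℕ) : Prop := offComponent G x k = offComponent G x a ∧
    switchedSum σ g x k = switchedSum σ g x a
  have hgood : ∀ p q, Z p → Z q → p < q → q < p + d → GoodArc G σ g x d p q :=
    fun p q hp hq hpq hqp => ⟨hpq, hqp, hp.1.trans hq.1.symm, hp.2.trans hq.2.symm⟩
  have hperiod : ∀ k, Z k → Z (k + 2 * d) := fun k hk =>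
    ⟨(hx.offComponent_add_mul k 2).trans hk.1, (hx.switchedSum_add_two_mul k).trans hk.2⟩
  have hanti : ∀ k, Z k → ¬ Z (k + d) := fun k hk hkd => by
    have := hkd.2
    rw [hx.switchedSum_add_period, hk.2] at this
    simp at this
  obtain ⟨p, q, hp, hq, hpq, hqp, hab, hab'⟩ := exists_common_arc hperiod hanti
    (fun α β γ hα hβ hγ hαβ hβγ hβα hγβ =>
      hno α β γ (hgood α β hα hβ hαβ hβα) (hgood β γ hβ hγ hβγ hγβ))
    ⟨rfl, rfl⟩ ⟨h.comp_eq.symm, h.sum_eq.symm⟩ ⟨hcomp.symm, hsum.symm⟩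
    ⟨(hcomp.trans h'.comp_eq).symm, (hsum.trans h'.sum_eq).symm⟩ h.lt h.lt_add h'.lt h'.lt_add
    hle hlt
  refine ⟨p, q, hgood p q hp hq hpq hqp, hp.1, ?_, cyclicInterval_mono hab'.1 hab'.2⟩
  obtain hab | hab := hab
  · exact cyclicInterval_mono hab.1 hab.2
  · rw [← cyclicInterval_add_mul d a b 2]
    exact cyclicInterval_mono hab.1 hab.2

lemma exists_common_goodArc (hx : SwitchedCycle G σ g x d)
    (hno : ∀ α β γ, GoodArc G σ g x d α β → GoodArc G σ g x d β γ → γ ≤ α + d)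
    (h : GoodArc G σ g x d a b) (h' : GoodArc G σ g x d a' b')
    (hcomp : offComponent G x a = offComponent G x a') :
    ∃ p q, GoodArc G σ g x d p q ∧ offComponent G x p = offComponent G x a ∧
      cyclicInterval d a b ⊆ cyclicInterval d p q ∧
      cyclicInterval d a' b' ⊆ cyclicInterval d p q := by
  obtain ⟨m, n, hsum, hle, hlt⟩ := hx.exists_aligned a a'
  simpa only [hx.offComponent_add_mul, cyclicInterval_add_mul] using
    hx.exists_common_goodArc_of_aligned hno (h.add_mul hx m) (h'.add_mul hx n)
      (by rw [hx.offComponent_add_mul, hx.offComponent_add_mul, hcomp]) hsum hle hlt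

end SwitchedCycle

end CommonArcs

section GoodArcCovers

variable {G : SimpleGraph V} {σ : Sym2 V → Bool} {g : V → ZMod 2} {x : ℕ → V} {d : ℕ}

open Classical in
lemma GoodArc.hasSignCover [Fintype V] {a b : ℕ} (h : GoodArc G σ g x d a b)
    (hx : SwitchedCycle G σ g x d) (hG : IsCubic G) :
    HasSignCover G σ (arcEdges x a b) (b - a + (1 + {v ∈ offVertices x |
      (offCycle G x).connectedComponentMk v = offComponent G x a}.card)) := by
  obtain ⟨w, hw⟩ := (ConnectedComponent.exact h.comp_eq).exists_isPath
  refine (h.hasSignCover_arcEdges hx hG w).mono subset_rfl (Nat.add_le_add_left ?_ _)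
  have hsub : w.support.toFinset ⊆ {x a, x b} ∪ {v ∈ offVertices x |
      (offCycle G x).connectedComponentMk v = offComponent G x a} := by
    intro v hv
    rw [List.mem_toFinset] at hv
    rw [Finset.mem_union, Finset.mem_filter, mem_offVertices]
    by_cases hvx : v ∈ Set.range x
    · obtain ⟨k, rfl⟩ := hvx
      exact Or.inl (by simpa using hx.eq_end_of_mem_support hG hw hv)
    · exact Or.inr ⟨hvx, (ConnectedComponent.sound ⟨w.takeUntil v hv⟩).symm⟩
  have hcard := (Finset.card_le_card hsub).trans (Finset.card_union_le _ _)
  rw [card_support_of_isPath hw] at hcard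
  have := Finset.card_le_two (a := x a) (b := x b)
  omega

namespace SwitchedCycle

lemma exists_greatest_goodArc (hx : SwitchedCycle G σ g x d)
    (hno : ∀ α β γ, GoodArc G σ g x d α β → GoodArc G σ g x d β γ → γ ≤ α + d) {a₀ b₀ : ℕ}
    (h₀ : GoodArc G σ g x d a₀ b₀) :
    ∃ a b, GoodArc G σ g x d a b ∧ offComponent G x a = offComponent G x a₀ ∧
      ∀ a' b', GoodArc G σ g x d a' b' → offComponent G x a' = offComponent G x a₀ →
        cyclicInterval d a' b' ⊆ cyclicInterval d a b := by
  have : NeZero d := ⟨hx.pos.ne'⟩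
  obtain ⟨_, ⟨a, b, h, hcomp, rfl⟩, hmax⟩ := (Set.toFinite {A | ∃ a b, GoodArc G σ g x d a b ∧
    offComponent G x a = offComponent G x a₀ ∧ cyclicInterval d a b = A}).exists_maximal
      ⟨_, a₀, b₀, h₀, rfl, rfl⟩
  refine ⟨a, b, h, hcomp, fun a' b' h' hcomp' => ?_⟩
  obtain ⟨p, q, hpq, hp, hsub, hsub'⟩ :=
    hx.exists_common_goodArc hno h h' (hcomp.trans hcomp'.symm)
  exact hsub'.trans (hmax ⟨p, q, hpq, hp.trans hcomp, rfl⟩ hsub)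

lemma exists_goodArc_cover [Finite V] (hx : SwitchedCycle G σ g x d) (hns : NoSingleNegative G σ)
    (hno : ∀ α β γ, GoodArc G σ g x d α β → GoodArc G σ g x d β γ → γ ≤ α + d) :
    ∃ (K : Finset (offCycle G x).ConnectedComponent)
      (a b : (offCycle G x).ConnectedComponent → ℕ),
      (∀ C ∈ K, GoodArc G σ g x d (a C) (b C) ∧ offComponent G x (a C) = C) ∧
        Set.range (stepEdge x) ⊆ ⋃ C ∈ K, arcEdges x (a C) (b C) ∧
        ∑ C ∈ K, (b C - a C) + K.card ≤ 2 * d := by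
  classical
  have := Fintype.ofFinite (offCycle G x).ConnectedComponent
  have : NeZero d := ⟨hx.pos.ne'⟩
  let J : Finset (offCycle G x).ConnectedComponent :=
    {C | ∃ a b, GoodArc G σ g x d a b ∧ offComponent G x a = C}
  have hgreatest : ∀ C ∈ J, ∃ a b, GoodArc G σ g x d a b ∧ offComponent G x a = C ∧
      ∀ a' b', GoodArc G σ g x d a' b' → offComponent G x a' = C →
        cyclicInterval d a' b' ⊆ cyclicInterval d a b := by
    intro C hC
    obtain ⟨a₀, b₀, h₀, rfl⟩ := (Finset.mem_filter.1 hC).2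
    exact hx.exists_greatest_goodArc hno h₀
  choose! a b hgood hcomp hmax using hgreatest
  have hcov : ∀ t : ZMod d, ∃ C ∈ J, t ∈ cyclicInterval d (a C) (b C) := by
    intro t
    obtain ⟨p, q, hpq, hp, hq⟩ := hx.exists_goodArc hns (t.val + 1)
    have hJ : offComponent G x p ∈ J := Finset.mem_filter.2 ⟨Finset.mem_univ _, p, q, hpq, rfl⟩
    refine ⟨_, hJ, hmax _ hJ p q hpq rfl (mem_cyclicInterval.2 ⟨t.val + d, ⟨?_, ?_⟩, by simp⟩)⟩
    all_goals omega
  obtain ⟨K, hKJ, hK, hsum⟩ :=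
    exists_subcover_cyclicInterval (fun C hC => (hgood C hC).lt_add.le) hcov
  refine ⟨K, a, b, fun C hC => ⟨hgood C (hKJ hC), hcomp C (hKJ hC)⟩, ?_, hsum⟩
  rintro _ ⟨k, rfl⟩
  obtain ⟨C, hC, hk⟩ := hK k
  exact Set.mem_biUnion hC (hx.stepEdge_mem_arcEdges hk)

lemma exists_hasSignCover_of_no_triple [Fintype V] (hx : SwitchedCycle G σ g x d)
    (hG : IsCubic G) (hns : NoSingleNegative G σ)
    (hno : ∀ α β γ, GoodArc G σ g x d α β → GoodArc G σ g x d β γ → γ ≤ α + d) :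
    ∃ m, HasSignCover G σ (Set.range (stepEdge x)) m ∧ m ≤ Fintype.card V + d := by
  classical
  obtain ⟨K, a, b, hgood, hcov, hsum⟩ := hx.exists_goodArc_cover hns hno
  have hcover : ∀ C ∈ K, HasSignCover G σ (arcEdges x (a C) (b C)) (b C - a C +
      (1 + {v ∈ offVertices x | (offCycle G x).connectedComponentMk v = C}.card)) := by
    intro C hC
    obtain ⟨h, hcomp⟩ := hgood C hC
    have := h.hasSignCover hx hG
    rwa [hcomp] at this
  refine ⟨_, (HasSignCover.biUnion K _ _ hcover).mono hcov le_rfl, ?_⟩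
  have hfibers : ∑ C ∈ K, {v ∈ offVertices x | (offCycle G x).connectedComponentMk v = C}.card
      ≤ (offVertices x).card :=
    (Finset.sum_card_fiberwise_eq_card_filter _ _ _).trans_le (Finset.card_filter_le _ _)
  have hoff := hx.card_offVertices_add
  rw [Finset.sum_add_distrib, Finset.sum_add_distrib, Finset.sum_const, smul_eq_mul, mul_one]
  omega

end SwitchedCycle

lemma exists_switchedCycle (hG : IsCubic G) {r : V} {p : G.Walk r r} (hp : p.IsCycle)
    (hsign : walkSign σ p = 1) (hdisj : ∀ s, ∀ q : G.Walk s s, q.IsCycle →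
      p.support.Disjoint q.support → walkSign σ q = 0) :
    ∃ g x, SwitchedCycle G σ g x p.length ∧ p.edgeSet ⊆ Set.range (stepEdge x) := by
  obtain ⟨x, hx, hedges⟩ := exists_periodicCycle hp
  have hsupport : ∀ z ∈ p.support, z ∈ Set.range x := by
    intro z hz
    obtain ⟨e, he, hze⟩ := (Walk.mem_support_iff_exists_mem_edges_of_not_nil hp.not_nil).1 hz
    rw [hedges, List.mem_map] at he
    obtain ⟨k, -, rfl⟩ := he
    obtain rfl | rfl := Sym2.mem_iff.1 hze
    exacts [⟨k, rfl⟩, ⟨k + 1, rfl⟩]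
  have hbalanced : ∀ s, ∀ q : (offCycle G x).Walk s s, q.IsCycle → walkSign σ q = 0 := by
    intro s q hq
    rw [← walkSign_mapLe (offCycle_le x)]
    refine hdisj s _ (hq.mapLe _) fun z hz hzq => ?_
    obtain ⟨k, rfl⟩ := hsupport z hz
    rw [Walk.support_mapLe_eq_support] at hzq
    exact hx.notMem_support_of_isCycle hG hq k hzq
  obtain ⟨g, hg⟩ := exists_potential hbalanced
  refine ⟨g, x, ⟨hx, hg, hx.switchedSum_add (by rw [← hedges]; exact hsign)⟩, fun e he => ?_⟩
  rw [Walk.mem_edgeSet, hedges, List.mem_map] at he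
  obtain ⟨k, -, rfl⟩ := he
  exact ⟨k, rfl⟩

lemma exists_hasSignCover_of_unbalanced_isCycle [Fintype V] (hG : IsCubic G)
    (hconn : G.Connected) (hns : NoSingleNegative G σ) {r : V} {p : G.Walk r r} (hp : p.IsCycle)
    (hsign : walkSign σ p = 1) :
    ∃ m, HasSignCover G σ p.edgeSet m ∧ 3 * m ≤ 4 * Fintype.card V + 3 * p.length := by
  have hlen := hp.three_le_length
  by_cases hdisj : ∀ s, ∀ q : G.Walk s s, q.IsCycle → p.support.Disjoint q.support →
      walkSign σ q = 0
  · obtain ⟨g, x, hx, hsub⟩ := exists_switchedCycle hG hp hsign hdisj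
    by_cases hno : ∀ α β γ, GoodArc G σ g x p.length α β → GoodArc G σ g x p.length β γ →
        γ ≤ α + p.length
    · obtain ⟨m, hm, hle⟩ := hx.exists_hasSignCover_of_no_triple hG hns hno
      exact ⟨m, hm.mono hsub le_rfl, by omega⟩
    · push Not at hno
      obtain ⟨α, β, γ, hαβ, hβγ, hαγ⟩ := hno
      obtain ⟨m, hm, hle⟩ := hx.exists_hasSignCover_of_triple hG hαβ hβγ hαγ
      exact ⟨m, hm.mono hsub le_rfl, by omega⟩
  · push Not at hdisj
    obtain ⟨s, q, hq, hpq, hqsign⟩ := hdisj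
    have hqsign' : walkSign σ q = 1 := by
      by_contra h
      exact hqsign (zmod_two_ne_one_iff.1 h)
    exact ⟨_, (HasSignCover.of_disjoint_unbalanced_of_connected hconn hp hq hsign hqsign' hpq).mono
      Set.subset_union_left le_rfl, by omega⟩

end GoodArcCovers

section SingleNegative

variable {G : SimpleGraph V} {σ : Sym2 V → Bool} {g : V → ZMod 2}

lemma sum_edgeFinset_sum_eq_zero [Fintype V] [DecidableEq V] [DecidableRel G.Adj]
    (hG : ∀ v, Even (G.degree v)) (g : V → ZMod 2) :
    ∑ f ∈ G.edgeFinset, ∑ v ∈ f.toFinset, g v = 0 := by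
  rw [Finset.sum_comm' (t' := Finset.univ) (s' := fun v => G.incidenceFinset v)]
  · refine Finset.sum_eq_zero fun v _ => ?_
    rw [Finset.sum_const, card_incidenceFinset_eq_degree, nsmul_eq_mul,
      (ZMod.natCast_eq_zero_iff_even).2 (hG v), zero_mul]
  · intro f v
    simp [incidenceSet]

lemma natCast_negCount (E : Finset (Sym2 V)) :
    (negCount σ (E : Set (Sym2 V)) : ZMod 2) = ∑ f ∈ E, edgeSign σ f := by
  classical
  have h : (E : Set (Sym2 V)) ∩ {f | σ f = true} = (E.filter fun f => σ f = true : Finset _) := by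
    ext f; simp
  rw [negCount, h, Set.ncard_coe_finset, Finset.natCast_card_filter]
  rfl

lemma IsCircuit.even_degree_spanningCoe {C : G.Subgraph} (hC : IsCircuit G C) (v : V)
    [Fintype (C.spanningCoe.neighborSet v)] : Even (C.spanningCoe.degree v) := by
  have hn : C.spanningCoe.neighborSet v = C.neighborSet v := rfl
  rw [← card_neighborSet_eq_degree, ← Nat.card_eq_fintype_card, Nat.card_coe_set_eq, hn]
  by_cases hv : v ∈ C.verts
  · rw [hC.2 v hv]
    exact even_two
  · have : C.neighborSet v = ∅ :=
      Set.eq_empty_of_forall_notMem fun w hw => hv (Subgraph.Adj.fst_mem hw)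
    simp [this]

lemma edgeSign_eq_sum_add_ite [DecidableEq V] {u v : V} {e : Sym2 V} (huv : G.Adj u v)
    (h : edgeSign σ s(u, v) = g u + g v ↔ s(u, v) ≠ e) :
    edgeSign σ s(u, v) = ∑ w ∈ s(u, v).toFinset, g w + if s(u, v) = e then 1 else 0 := by
  rw [Sym2.toFinset_mk_eq, Finset.sum_pair huv.ne]
  split_ifs with he
  · have hne : edgeSign σ s(u, v) ≠ g u + g v := fun h' => h.1 h' he
    revert hne
    generalize edgeSign σ s(u, v) = a
    generalize g u + g v = b
    revert a b; decide
  · rw [h.2 he, add_zero]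

-- Summed over a circuit, the coboundary of `g` vanishes, since every vertex is met twice.
lemma IsCircuit.odd_negCount_iff_mem_edgeSet [Finite V] {C : G.Subgraph} (hC : IsCircuit G C)
    {e : Sym2 V}
    (h : ∀ u v, C.Adj u v → (edgeSign σ s(u, v) = g u + g v ↔ s(u, v) ≠ e)) :
    Odd (negCount σ C.edgeSet) ↔ e ∈ C.edgeSet := by
  classical
  have := Fintype.ofFinite V
  have hE : C.edgeSet = (C.spanningCoe.edgeFinset : Set (Sym2 V)) := by
    rw [coe_edgeFinset, Subgraph.edgeSet_spanningCoe]
  have hterm : ∀ f ∈ C.spanningCoe.edgeFinset,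
      edgeSign σ f = ∑ v ∈ f.toFinset, g v + if f = e then 1 else 0 := by
    intro f hf
    induction f with
    | _ u v =>
      have huv : C.Adj u v := by simpa using hf
      exact edgeSign_eq_sum_add_ite huv.adj_sub (h u v huv)
  have hsum : (negCount σ C.edgeSet : ZMod 2) = if e ∈ C.edgeSet then 1 else 0 := by
    rw [hE, natCast_negCount, Finset.sum_congr rfl hterm, Finset.sum_add_distrib,
      sum_edgeFinset_sum_eq_zero fun v => hC.even_degree_spanningCoe v, zero_add,
      Finset.sum_ite_eq']
    simp only [Finset.mem_coe]
  rw [← ZMod.natCast_eq_one_iff_odd, hsum]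
  simp

lemma IsCircuit.reachable_of_mem {C : G.Subgraph} (hC : IsCircuit G C) {y z : V}
    (hy : y ∈ C.verts) (hz : z ∈ C.verts) : G.Reachable y z :=
  (hC.1.coe.preconnected ⟨y, hy⟩ ⟨z, hz⟩).map C.hom

lemma IsSignCircuit.reachable_of_mem {H : G.Subgraph} (hH : IsSignCircuit G σ H) {y z : V}
    (hy : y ∈ H.verts) (hz : z ∈ H.verts) : G.Reachable y z := by
  classical
  rcases hH with hH | ⟨C₁, C₂, P, u, v, hC₁, hC₂, ⟨w, -, hPverts, -⟩, hu, hv, -, -, -, -, rfl⟩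
  · exact hH.1.reachable_of_mem hy hz
  · have hreach : ∀ x ∈ (C₁ ⊔ C₂ ⊔ P).verts, G.Reachable u x := by
      rintro x ((hx | hx) | hx)
      · exact hC₁.1.reachable_of_mem hu hx
      · exact w.reachable.trans (hC₂.1.reachable_of_mem hv hx)
      · rw [hPverts] at hx
        exact (w.takeUntil x hx).reachable
    exact (hreach y hy).symm.trans (hreach z hz)

lemma IsSignCircuit.notMem_edgeSet [Finite V] {H : G.Subgraph} (hH : IsSignCircuit G σ H)
    {e : Sym2 V}
    (h : ∀ u v, H.Adj u v → (edgeSign σ s(u, v) = g u + g v ↔ s(u, v) ≠ e)) :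
    e ∉ H.edgeSet := by
  intro he
  rcases hH with ⟨hC, heven⟩ | ⟨C₁, C₂, P, u, v, hC₁, hC₂, -, -, -, -, -, -, hdisj, rfl⟩
  · exact Nat.not_even_iff_odd.2 ((hC.odd_negCount_iff_mem_edgeSet h).2 he) heven
  · have he₁ := (hC₁.1.odd_negCount_iff_mem_edgeSet
      fun u v huv => h u v (Or.inl (Or.inl huv))).1 hC₁.2
    have he₂ := (hC₂.1.odd_negCount_iff_mem_edgeSet
      fun u v huv => h u v (Or.inl (Or.inr huv))).1 hC₂.2
    exact Set.eq_empty_iff_forall_notMem.1 hdisj _ ⟨he₁, he₂⟩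

lemma FlowAdmissible.noSingleNegative_toSimpleGraph [Finite V] (hfa : FlowAdmissible G σ)
    (K : G.ConnectedComponent) :
    NoSingleNegative K.toSimpleGraph (fun e => σ (e.map (↑))) := by
  classical
  intro e he g hg
  obtain ⟨g', hg'⟩ : ∃ g' : V → ZMod 2, ∀ v : K, g' v = g v :=
    ⟨Function.extend (↑) g 0, fun v => Subtype.val_injective.extend_apply g 0 v⟩
  have heG : e.map (↑) ∈ G.edgeSet := by
    induction e with
    | _ a b => exact (K.toSimpleGraph_adj a.2 b.2).1 he
  obtain ⟨H, hH, heH⟩ := hfa _ heG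
  have hverts : ∀ v ∈ H.verts, v ∈ K := by
    intro v hv
    induction e with
    | _ a b =>
      have ha : (a : V) ∈ H.verts := (Subgraph.mem_edgeSet.1 heH).fst_mem
      exact (ConnectedComponent.sound (hH.reachable_of_mem hv ha)).trans a.2
  refine hH.notMem_edgeSet (g := g') (fun u v huv => ?_) heH
  have hu := hverts u huv.fst_mem
  have hv := hverts v huv.snd_mem
  have hswitch := hg ⟨u, hu⟩ ⟨v, hv⟩ ((K.toSimpleGraph_adj hu hv).2 huv.adj_sub)
  rw [← hg', ← hg'] at hswitch
  exact hswitch.trans (Sym2.map.injective Subtype.val_injective).ne_iff.symm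

end SingleNegative

section Embeddings

variable {W : Type*} {G : SimpleGraph V} {G' : SimpleGraph W} {σ : Sym2 V → Bool}

lemma IsCircuit.map (f : G' ↪g G) {C : G'.Subgraph} (hC : IsCircuit G' C) :
    IsCircuit G (C.map f.toHom) := by
  constructor
  · let φ : C.coe →g (C.map f.toHom).coe :=
      ⟨fun x => ⟨f x, Set.mem_image_of_mem _ x.2⟩, fun {a b} h => ⟨_, _, h, rfl, rfl⟩⟩
    refine ⟨Connected.map φ ?_ hC.1.coe⟩
    rintro ⟨_, x, hx, rfl⟩
    exact ⟨⟨x, hx⟩, rfl⟩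
  · rintro _ ⟨x, hx, rfl⟩
    have hneighbors : (C.map f.toHom).neighborSet (f x) = f '' C.neighborSet x := by
      ext w
      constructor
      · rintro ⟨a, b, hab, ha, rfl⟩
        obtain rfl := f.injective ha
        exact ⟨b, hab, rfl⟩
      · rintro ⟨b, hb, rfl⟩
        exact ⟨x, b, hb, rfl, rfl⟩
    change ((C.map f.toHom).neighborSet (f x)).ncard = 2
    rw [hneighbors, Set.ncard_image_of_injective _ f.injective, hC.2 x hx]

lemma negCount_image_map {f : W → V} (hf : Function.Injective f) (E : Set (Sym2 W)) :
    negCount σ (Sym2.map f '' E) = negCount (fun e => σ (e.map f)) E := by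
  rw [negCount, negCount, ← Set.image_inter_preimage,
    Set.ncard_image_of_injective _ (Sym2.map.injective hf)]
  rfl

lemma negCount_edgeSet_map (f : G' ↪g G) (H : G'.Subgraph) :
    negCount σ (H.map f.toHom).edgeSet = negCount (fun e => σ (e.map f)) H.edgeSet := by
  rw [Subgraph.edgeSet_map]
  exact negCount_image_map f.injective _

lemma IsBalancedCircuit.map (f : G' ↪g G) {C : G'.Subgraph}
    (hC : IsBalancedCircuit G' (fun e => σ (e.map f)) C) :
    IsBalancedCircuit G σ (C.map f.toHom) :=
  ⟨hC.1.map f, (negCount_edgeSet_map f C).symm ▸ hC.2⟩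

lemma IsUnbalancedCircuit.map (f : G' ↪g G) {C : G'.Subgraph}
    (hC : IsUnbalancedCircuit G' (fun e => σ (e.map f)) C) :
    IsUnbalancedCircuit G σ (C.map f.toHom) :=
  ⟨hC.1.map f, (negCount_edgeSet_map f C).symm ▸ hC.2⟩

lemma IsPathSubgraph.map (f : G' ↪g G) {P : G'.Subgraph} {u v : W}
    (hP : IsPathSubgraph G' P u v) : IsPathSubgraph G (P.map f.toHom) (f u) (f v) := by
  obtain ⟨w, hw, hverts, hedges⟩ := hP
  refine ⟨w.map f.toHom, hw.map f.injective, ?_, ?_⟩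
  · ext x; simp [hverts]
  · rw [Subgraph.edgeSet_map, hedges]; ext x; simp

lemma IsBarbell.map (f : G' ↪g G) {H : G'.Subgraph}
    (hH : IsBarbell G' (fun e => σ (e.map f)) H) : IsBarbell G σ (H.map f.toHom) := by
  obtain ⟨C₁, C₂, P, u, v, hC₁, hC₂, hP, hu, hv, hPu, hPv, hverts, hedges, rfl⟩ := hH
  have hf : Function.Injective f.toHom := f.injective
  refine ⟨C₁.map f.toHom, C₂.map f.toHom, P.map f.toHom, f u, f v, hC₁.map f, hC₂.map f,
    hP.map f, Set.mem_image_of_mem _ hu, Set.mem_image_of_mem _ hv, ?_, ?_, ?_, ?_, ?_⟩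
  · rw [Subgraph.map_verts, Subgraph.map_verts, ← Set.image_inter hf, hPu, Set.image_singleton]
    rfl
  · rw [Subgraph.map_verts, Subgraph.map_verts, ← Set.image_inter hf, hPv, Set.image_singleton]
    rfl
  · rw [Subgraph.map_verts, Subgraph.map_verts, ← Set.image_inter hf]
    refine (Set.image_mono hverts).trans ?_
    rw [Set.image_inter hf, Set.image_singleton, Set.image_singleton]
    rfl
  · rw [Subgraph.edgeSet_map, Subgraph.edgeSet_map,
      ← Set.image_inter (Sym2.map.injective hf), hedges, Set.image_empty]
  · rw [Subgraph.map_sup, Subgraph.map_sup]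

lemma IsSignCircuit.map (f : G' ↪g G) {H : G'.Subgraph}
    (hH : IsSignCircuit G' (fun e => σ (e.map f)) H) : IsSignCircuit G σ (H.map f.toHom) :=
  hH.imp (IsBalancedCircuit.map f) (IsBarbell.map f)

lemma HasSignCover.map (f : G' ↪g G) {S : Set (Sym2 W)} {m : ℕ}
    (h : HasSignCover G' (fun e => σ (e.map f)) S m) :
    HasSignCover G σ (Sym2.map f '' S) m := by
  obtain ⟨𝓕, hsign, hcov, hlen⟩ := h
  refine ⟨𝓕.map fun H => H.map f.toHom, ?_, ?_, ?_⟩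
  · intro H hH
    obtain ⟨H', hH', rfl⟩ := Multiset.mem_map.1 hH
    exact (hsign H' hH').map f
  · rintro _ ⟨e, he, rfl⟩
    obtain ⟨H, hH, heH⟩ := hcov e he
    refine ⟨H.map f.toHom, Multiset.mem_map_of_mem _ hH, ?_⟩
    rw [Subgraph.edgeSet_map]
    exact ⟨e, heH, rfl⟩
  · refine le_trans (le_of_eq ?_) hlen
    rw [coverLength, coverLength, Multiset.map_map]
    congr 1
    refine Multiset.map_congr rfl fun H _ => ?_
    rw [Function.comp_apply, Subgraph.edgeSet_map]
    exact Set.ncard_image_of_injective _ (Sym2.map.injective f.injective)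

end Embeddings

section Components

variable {G : SimpleGraph V} {σ : Sym2 V → Bool} {c : Sym2 V → Fin 3}

lemma IsCubic.toSimpleGraph (hG : IsCubic G) (K : G.ConnectedComponent) :
    IsCubic K.toSimpleGraph := by
  intro v
  rw [← hG v, ← Set.ncard_image_of_injective _ Subtype.val_injective]
  congr 1
  ext w
  constructor
  · rintro ⟨w, hw, rfl⟩
    exact hw
  · intro hw
    have hwK : w ∈ K := (ConnectedComponent.sound (Adj.reachable hw.symm)).trans v.2
    exact ⟨⟨w, hwK⟩, hw, rfl⟩

lemma Proper3EdgeColoring.comap {W : Type*} {G' : SimpleGraph W}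
    (hc : Proper3EdgeColoring G c) (f : G' ↪g G) :
    Proper3EdgeColoring G' (fun e => c (e.map f)) := by
  intro e he e' he' hne ⟨x, hx, hx'⟩
  exact hc _ (f.toHom.map_mem_edgeSet he) _ (f.toHom.map_mem_edgeSet he')
    (fun h => hne (Sym2.map.injective f.injective h))
    ⟨f x, Sym2.mem_map.2 ⟨x, hx, rfl⟩, Sym2.mem_map.2 ⟨x, hx', rfl⟩⟩

lemma Proper3EdgeColoring.exists_hasSignCover_component [Finite V]
    (hc : Proper3EdgeColoring G c) (hG : IsCubic G) (hfa : FlowAdmissible G σ)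
    (K : G.ConnectedComponent) :
    ∃ m, HasSignCover G σ (Sym2.map (↑) '' K.toSimpleGraph.edgeSet) m ∧
      3 * m ≤ 10 * Nat.card K := by
  have := Fintype.ofFinite V
  classical
  let f : K.toSimpleGraph ↪g G := Embedding.induce K.supp
  obtain ⟨m, hm, hle⟩ := (hc.comap f).exists_hasSignCover_of_isCycle
    (σ := fun e => σ (e.map f)) (hG.toSimpleGraph K) K.connected_toSimpleGraph
    fun _ _ hp hsign => exists_hasSignCover_of_unbalanced_isCycle (hG.toSimpleGraph K)
      K.connected_toSimpleGraph (hfa.noSingleNegative_toSimpleGraph K) hp hsign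
  rw [← Nat.card_eq_fintype_card] at hle
  exact ⟨m, hm.map f, hle⟩

lemma edgeSet_subset_iUnion_image_toSimpleGraph :
    G.edgeSet ⊆ ⋃ K : G.ConnectedComponent, Sym2.map (↑) '' K.toSimpleGraph.edgeSet := by
  intro e he
  induction e with
  | _ u v =>
    refine Set.mem_iUnion.2 ⟨G.connectedComponentMk u, s(⟨u, rfl⟩, ⟨v, ?_⟩), he, rfl⟩
    exact ConnectedComponent.sound (Adj.reachable (G.adj_symm he))

lemma Proper3EdgeColoring.exists_hasSignCover [Fintype V] (hc : Proper3EdgeColoring G c)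
    (hG : IsCubic G) (hfa : FlowAdmissible G σ) :
    ∃ m, HasSignCover G σ G.edgeSet m ∧ 3 * m ≤ 10 * Fintype.card V := by
  classical
  choose m hm hle using hc.exists_hasSignCover_component hG hfa
  have hcard : ∑ K : G.ConnectedComponent, Nat.card K = Fintype.card V := by
    rw [← Nat.card_sigma, ← Nat.card_eq_fintype_card]
    exact Nat.card_congr (Equiv.sigmaFiberEquiv G.connectedComponentMk)
  refine ⟨∑ K, m K, (HasSignCover.biUnion Finset.univ _ m fun K _ => hm K).mono ?_ le_rfl, ?_⟩
  · simpa using edgeSet_subset_iUnion_image_toSimpleGraph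
  · rw [← hcard, Finset.mul_sum, Finset.mul_sum]
    exact Finset.sum_le_sum fun K _ => hle K

end Components

/-- Main theorem. Every flow-admissible 3-edge-colorable cubic
signed graph has a sign-circuit cover of length at most `(20/9)|E(G)|`. -/
theorem stmt4 {V : Type*} [Fintype V] (G : SimpleGraph V) (σ : Sym2 V → Bool)
    (hfa : FlowAdmissible G σ) (hcubic : IsCubic G)
    (h3 : ThreeEdgeColorable G) :
    ∃ 𝓕 : Multiset G.Subgraph, (∀ H ∈ 𝓕, IsSignCircuit G σ H) ∧
      Covers G 𝓕 G.edgeSet ∧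
      9 * coverLength G 𝓕 ≤ 20 * G.edgeSet.ncard := by
  obtain ⟨c, hc⟩ := h3
  obtain ⟨m, ⟨𝓕, hsign, hcov, hlen⟩, hm⟩ := hc.exists_hasSignCover hcubic hfa
  have hedges := hcubic.two_mul_ncard_edgeSet
  exact ⟨𝓕, hsign, hcov, by omega⟩
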